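/- (Converse bound for the reliability function.) For any discrete memoryless channel W: X → Y on finite alphabets and 0 ≤ r < I_∞(W), the reliability function satisfies E_rf^{(1+s)}(W,r) ≤ sup_{t≥0} t(r − I_{1+t}(W)) when s ∈ (−1,0], and E_rf^{(1+s)}(W,r) ≤ max{ sup_{t≥s} t(r − I_{1+t}(W)), 0 } when s ∈ (0,∞]. -/

import Mathlib

open scoped ENNReal NNReal BigOperators Classical
open Filter

noncomputable section

namespace RST

/-- Base-2 logarithm `ℝ≥0∞ → EReal`, with `log 0 = ⊥` and `log ⊤ = ⊤`. -/
def elog2 (s : ℝ≥0∞) : EReal :=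
  if s = 0 then ⊥ else if s = ⊤ then ⊤ else ((Real.logb 2 s.toReal : ℝ) : EReal)

/-- Base-2 logarithm `EReal → EReal` (for nonnegative arguments). -/
def eLog2 (x : EReal) : EReal :=
  if x = ⊤ then ⊤ else if x ≤ 0 then ⊥ else ((Real.logb 2 x.toReal : ℝ) : EReal)

/-- Base-2 exponential `EReal → ℝ≥0∞`. -/
def epow2 (x : EReal) : ℝ≥0∞ :=
  if x = ⊤ then ⊤ else if x = ⊥ then 0 else ENNReal.ofReal ((2 : ℝ) ^ x.toReal)

variable {X Y : Type*}

/-- A probability distribution on a finite alphabet, as an `ℝ≥0∞`-valued function. -/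
def IsDist [Fintype X] (P : X → ℝ≥0∞) : Prop := ∑ x, P x = 1

/-- A discrete memoryless channel: every row is a probability distribution. -/
def IsChannel [Fintype X] [Fintype Y] (W : X → Y → ℝ≥0∞) : Prop := ∀ x, ∑ y, W x y = 1

/-- Order-`α` Rényi divergence (base 2), with the order `α ∈ [0,∞]` encoded as `ℝ≥0∞`.
The conventions `0/0 = 0` and `a/0 = ∞` (for `a > 0`, `α > 1`) are built into `ℝ≥0∞`
arithmetic.  The second argument is allowed to be an arbitrary nonnegative vector. -/
def renyiD [Fintype X] (α : ℝ≥0∞) (P Q : X → ℝ≥0∞) : EReal :=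
  if α = 0 then - elog2 (∑ x ∈ Finset.univ.filter fun x => P x ≠ 0, Q x)
  else if α = 1 then ∑ x, ((P x).toReal : EReal) * elog2 (P x / Q x)
  else if α = ⊤ then elog2 (⨆ x, P x / Q x)
  else (((α.toReal - 1)⁻¹ : ℝ) : EReal) *
    elog2 (∑ x, P x ^ α.toReal * Q x ^ (1 - α.toReal))

/-- The `X`-marginal of a joint distribution on `X × Y`. -/
def margX [Fintype X] [Fintype Y] (P : X × Y → ℝ≥0∞) : X → ℝ≥0∞ := fun x => ∑ y, P (x, y)

/-- Order-`α` Rényi mutual information `I_α(X:Y)_P = min_{Q_Y} D_α(P‖P_X × Q_Y)`. -/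
def renyiMI [Fintype X] [Fintype Y] (α : ℝ≥0∞) (P : X × Y → ℝ≥0∞) : EReal :=
  ⨅ Q : {Q : Y → ℝ≥0∞ // IsDist Q}, renyiD α P fun p => margX P p.1 * Q.1 p.2

/-- The joint input-output distribution `P_X · W`. -/
def joint [Fintype X] [Fintype Y] (PX : X → ℝ≥0∞) (W : X → Y → ℝ≥0∞) : X × Y → ℝ≥0∞ :=
  fun p => PX p.1 * W p.1 p.2

/-- Order-`α` Rényi capacity `I_α(W) = max_{P_X} I_α(X:Y)_{P_X · W}`. -/
def renyiCap [Fintype X] [Fintype Y] (α : ℝ≥0∞) (W : X → Y → ℝ≥0∞) : EReal :=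
  ⨆ P : {P : X → ℝ≥0∞ // IsDist P}, renyiMI α (joint P.1 W)

/-- `N` is a simulation of a channel `X → Y` with communication cost at most `c` bits:
shared randomness `K = Fin m` with distribution `PK`, a message set `{1,…,M}` with
`log₂ M ≤ c`, an encoder `E` and a decoder `D`. -/
def IsSimulation [Fintype X] [Fintype Y] (c : ℝ) (N : X → Y → ℝ≥0∞) : Prop :=
  ∃ (m M : ℕ) (PK : Fin m → ℝ≥0∞) (E : X → Fin m → Fin M → ℝ≥0∞)
    (D : Fin M → Fin m → Y → ℝ≥0∞),
    0 < M ∧ Real.logb 2 M ≤ c ∧ (∑ k, PK k = 1) ∧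
    (∀ x k, ∑ j, E x k j = 1) ∧ (∀ j k, ∑ y, D j k y = 1) ∧
    ∀ x y, N x y = ∑ k, ∑ j, PK k * E x k j * D j k y

/-- `D_α(W, N) := max_x D_α(W(·|x) ‖ N(·|x))`. -/
def chD [Fintype X] [Fintype Y] (α : ℝ≥0∞) (W N : X → Y → ℝ≥0∞) : EReal :=
  ⨆ x, renyiD α (W x) (N x)

/-- `𝖣_α(W, c) := min_{N ∈ A(W,c)} D_α(W, N)`. -/
def simD [Fintype X] [Fintype Y] (α : ℝ≥0∞) (W : X → Y → ℝ≥0∞) (c : ℝ) : EReal :=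
  ⨅ N : {N : X → Y → ℝ≥0∞ // IsSimulation c N}, chD α W N.1

/-- The `n`-fold memoryless extension `W^{×n}` of a channel `W`. -/
def prodCh [Fintype X] [Fintype Y] (n : ℕ) (W : X → Y → ℝ≥0∞) :
    (Fin n → X) → (Fin n → Y) → ℝ≥0∞ :=
  fun xs ys => ∏ i, W (xs i) (ys i)

/-- A sequence of communication costs with rate at most `r`. -/
def RateOK (r : ℝ) (c : ℕ → ℝ) : Prop :=
  (∀ n, 0 ≤ c n) ∧ Filter.limsup (fun n : ℕ => ((c n / n : ℝ) : EReal)) Filter.atTop ≤ (r : EReal)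

/-- Reliability function `E_rf^{(α)}(W, r)`. -/
def Erf [Fintype X] [Fintype Y] (α : ℝ≥0∞) (W : X → Y → ℝ≥0∞) (r : ℝ) : EReal :=
  ⨆ c : {c : ℕ → ℝ // RateOK r c},
    Filter.liminf
      (fun n : ℕ => (((-1 : ℝ) / n : ℝ) : EReal) * eLog2 (simD α (prodCh n W) (c.1 n)))
      Filter.atTop

/-- Strong converse exponent `E_sc^{(α)}(W, r)`. -/
def Esc [Fintype X] [Fintype Y] (α : ℝ≥0∞) (W : X → Y → ℝ≥0∞) (r : ℝ) : EReal :=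
  ⨅ c : {c : ℕ → ℝ // RateOK r c},
    Filter.limsup
      (fun n : ℕ => (((1 : ℝ) / n : ℝ) : EReal) * simD α (prodCh n W) (c.1 n))
      Filter.atTop

/-- The `α`-Rényi simulation rate `R_RST^{(α)}(W)`. -/
def Rrst [Fintype X] [Fintype Y] (α : ℝ≥0∞) (W : X → Y → ℝ≥0∞) : EReal :=
  ⨅ c : {c : ℕ → ℝ // (∀ n, 0 ≤ c n) ∧
      Filter.limsup (fun n : ℕ => simD α (prodCh n W) (c n)) Filter.atTop = 0},
    Filter.limsup (fun n : ℕ => ((c.1 n / n : ℝ) : EReal)) Filter.atTop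

/-- n-fold product of a joint distribution on `X × Y`, as a distribution on pairs of
sequences. -/
def prodJoint [Fintype X] [Fintype Y] (n : ℕ) (P : X × Y → ℝ≥0∞) :
    (Fin n → X) × (Fin n → Y) → ℝ≥0∞ :=
  fun p => ∏ i, P (p.1 i, p.2 i)

/-- n-fold product distribution. -/
def prodDist [Fintype X] (n : ℕ) (P : X → ℝ≥0∞) : (Fin n → X) → ℝ≥0∞ :=
  fun xs => ∏ i, P (xs i)

/-- The type (empirical count vector) of a sequence. -/
def seqType [Fintype Y] [DecidableEq Y] {n : ℕ} (ys : Fin n → Y) : Y → ℕ :=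
  fun y => (Finset.univ.filter fun i => ys i = y).card

/-- The cardinality of the type class of a sequence. -/
def typeClassCard [Fintype Y] [DecidableEq Y] {n : ℕ} (ys : Fin n → Y) : ℕ :=
  (Finset.univ.filter fun zs : Fin n → Y => seqType zs = seqType ys).card

/-- The number of types of sequences in `Y^n`. -/
def numTypes (Y : Type*) [Fintype Y] [DecidableEq Y] (n : ℕ) : ℕ :=
  (Finset.univ.image fun ys : Fin n → Y => seqType ys).card

/-- `Φ_{Y^n}`: the uniform mixture over type classes of `Y^n`. -/
def PhiY (Y : Type*) [Fintype Y] [DecidableEq Y] (n : ℕ) : (Fin n → Y) → ℝ≥0∞ :=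
  fun ys => ((numTypes Y n : ℝ≥0∞) * (typeClassCard ys : ℝ≥0∞))⁻¹

end RST

namespace RST

lemma sum_prod_pi {α : Type*} [Fintype α] {n : ℕ} (f : Fin n → α → ℝ) :
    ∑ z : Fin n → α, ∏ k, f k (z k) = ∏ k, ∑ a, f k a := by
  rw [Finset.prod_univ_sum]
  simp [Fintype.piFinset_univ]

lemma cross_zero {α : Type*} [Fintype α] {n : ℕ} (p h : α → ℝ) (hp : ∑ a, p a = 1)
    (hh : ∑ a, p a * h a = 0) (i j : Fin n) :
    ∑ z : Fin n → α, (∏ k, p (z k)) * (h (z i) * h (z j)) =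
      if i = j then ∑ a, p a * h a ^ 2 else 0 := by
  have h1 : ∀ z : Fin n → α, (∏ k, p (z k)) * (h (z i) * h (z j)) =
      ∏ k, (p (z k) * ((if k = i then h (z k) else 1) * (if k = j then h (z k) else 1))) := by
    intro z
    rw [Finset.prod_mul_distrib, Finset.prod_mul_distrib]
    simp
  simp_rw [h1]
  rw [sum_prod_pi (fun k a => p a * ((if k = i then h a else 1) * (if k = j then h a else 1)))]
  split_ifs with hij
  · subst hij
    rw [Finset.prod_eq_single i]
    · simp [pow_two]
    · intro b _ hb
      simp [hb, hp]
    · simp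
  · apply Finset.prod_eq_zero (Finset.mem_univ i)
    simp [hij, hh]

lemma second_moment {α : Type*} [Fintype α] {n : ℕ} (p h : α → ℝ) (hp : ∑ a, p a = 1)
    (hh : ∑ a, p a * h a = 0) :
    ∑ z : Fin n → α, (∏ k, p (z k)) * (∑ k, h (z k)) ^ 2 = n * ∑ a, p a * h a ^ 2 := by
  have : ∀ z : Fin n → α, (∏ k, p (z k)) * (∑ k, h (z k)) ^ 2 =
      ∑ i, ∑ j, (∏ k, p (z k)) * (h (z i) * h (z j)) := by
    intro z
    rw [pow_two, Finset.sum_mul_sum, Finset.mul_sum]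
    simp_rw [Finset.mul_sum]
  simp_rw [this]
  rw [Finset.sum_comm]
  have h2 : ∀ i : Fin n, ∑ z : Fin n → α, ∑ j, (∏ k, p (z k)) * (h (z i) * h (z j)) =
      ∑ a, p a * h a ^ 2 := by
    intro i
    rw [Finset.sum_comm]
    simp_rw [cross_zero p h hp hh]
    simp
  simp_rw [h2]
  simp

lemma cheb {α : Type*} [Fintype α] (p g : α → ℝ) (hp0 : ∀ a, 0 ≤ p a) (hp : ∑ a, p a = 1)
    (μ : ℝ) (hμ : ∑ a, p a * g a = μ) (δ : ℝ) (hδ : 0 < δ) :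
    ∀ᶠ n : ℕ in atTop, ∑ z : Fin n → α,
      (if n * δ < |∑ k, g (z k) - n * μ| then ∏ k, p (z k) else 0) < 1 / 8 := by
  set V := ∑ a, p a * (g a - μ) ^ 2 with hV
  have hV0 : 0 ≤ V := Finset.sum_nonneg fun a _ => mul_nonneg (hp0 a) (sq_nonneg _)
  obtain ⟨n0, hn0⟩ := exists_nat_gt (8 * V / δ ^ 2)
  filter_upwards [eventually_gt_atTop n0] with n hn
  have hnn : (8 * V / δ ^ 2) < n := lt_trans hn0 (by exact_mod_cast hn)
  have hnpos : (0 : ℝ) < n := lt_of_le_of_lt (by positivity) hnn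
  have hh : ∑ a, p a * (g a - μ) = 0 := by
    simp_rw [mul_sub]
    rw [Finset.sum_sub_distrib, hμ, ← Finset.sum_mul, hp]; ring
  have key := second_moment (n := n) p (fun a => g a - μ) hp hh
  have hle : (n * δ) ^ 2 * ∑ z : Fin n → α,
      (if n * δ < |∑ k, g (z k) - n * μ| then ∏ k, p (z k) else 0) ≤ n * V := by
    rw [hV, ← key, Finset.mul_sum]
    apply Finset.sum_le_sum
    intro z _
    have hpz : 0 ≤ ∏ k, p (z k) := Finset.prod_nonneg fun k _ => hp0 _
    split_ifs with h
    · rw [mul_comm]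
      apply mul_le_mul_of_nonneg_left _ hpz
      have : ∑ k, (g (z k) - μ) = ∑ k, g (z k) - n * μ := by
        rw [Finset.sum_sub_distrib]; simp
      rw [this, ← sq_abs (∑ k, g (z k) - n * μ)]
      apply pow_le_pow_left₀ (by positivity) h.le
    · rw [mul_zero]; exact mul_nonneg hpz (sq_nonneg _)
  rw [div_lt_iff₀ (by positivity)] at hnn
  by_contra hcon
  push Not at hcon
  have h3 : (n * δ) ^ 2 * (1 / 8) ≤ n * V :=
    le_trans (mul_le_mul_of_nonneg_left hcon (by positivity)) hle
  nlinarith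

/-- marginals -/
def mX {X Y : Type*} [Fintype Y] (R : X → Y → ℝ) (x : X) : ℝ := ∑ y, R x y
def mY {X Y : Type*} [Fintype X] (R : X → Y → ℝ) (y : Y) : ℝ := ∑ x, R x y

structure IsJ {X Y : Type*} [Fintype X] [Fintype Y] (w R : X → Y → ℝ) : Prop where
  nn : ∀ x y, 0 ≤ R x y
  one : ∑ x, ∑ y, R x y = 1
  supp : ∀ x y, w x y = 0 → R x y = 0

def Jf {X Y : Type*} [Fintype X] [Fintype Y] (w R : X → Y → ℝ) : ℝ :=
  ∑ x, ∑ y, R x y * Real.logb 2 (w x y / mY R y)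
def Df {X Y : Type*} [Fintype X] [Fintype Y] (w R : X → Y → ℝ) : ℝ :=
  ∑ x, ∑ y, R x y * Real.logb 2 (R x y / (mX R x * w x y))

lemma prod_eq_pow_sum_logb {n : ℕ} (f : Fin n → ℝ) (hf : ∀ k, 0 < f k) :
    ∏ k, f k = (2 : ℝ) ^ (∑ k, Real.logb 2 (f k)) := by
  rw [← Real.logb_prod _ _ (fun k _ => (hf k).ne'),
    Real.rpow_logb (by norm_num) (by norm_num) (Finset.prod_pos fun k _ => hf k)]

lemma sum_triple {ι X Y : Type*} [Fintype ι] [Fintype X] [Fintype Y] {n : ℕ}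
    (F : (Fin n → ι × X × Y) → ℝ) :
    ∑ z, F z = ∑ u : Fin n → ι, ∑ x : Fin n → X, ∑ y : Fin n → Y,
      F (fun k => (u k, x k, y k)) := by
  rw [← (Equiv.arrowProdEquivProdArrow (Fin n) (fun _ => ι) (fun _ => X × Y)).symm.sum_comp]
  rw [Fintype.sum_prod_type]
  refine Finset.sum_congr rfl fun u _ => ?_
  rw [← (Equiv.arrowProdEquivProdArrow (Fin n) (fun _ => X) (fun _ => Y)).symm.sum_comp]
  rw [Fintype.sum_prod_type]
  rfl

lemma pow_small (δ : ℝ) (hδ : 0 < δ) : ∀ᶠ n : ℕ in atTop, (2 : ℝ) ^ (-(n * δ)) < 1 / 8 := by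
  obtain ⟨n0, hn0⟩ := exists_nat_gt (3 / δ)
  filter_upwards [eventually_gt_atTop n0] with n hn
  have h1 : 3 / δ < n := lt_trans hn0 (by exact_mod_cast hn)
  rw [div_lt_iff₀ hδ] at h1
  calc (2 : ℝ) ^ (-(n * δ)) < 2 ^ (-3 : ℝ) :=
        Real.rpow_lt_rpow_of_exponent_lt (by norm_num) (by linarith)
    _ = 1 / 8 := by
        rw [Real.rpow_neg (by norm_num)]; norm_num

lemma core {ι X Y : Type*} [Fintype ι] [Fintype X] [Fintype Y] (w : X → Y → ℝ)
    (hw0 : ∀ x y, 0 ≤ w x y) (lam : ι → ℝ) (hl0 : ∀ i, 0 ≤ lam i)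
    (hl1 : ∑ i, lam i = 1) (R : ι → X → Y → ℝ) (hR : ∀ i, IsJ w (R i)) (r δ : ℝ) (hδ : 0 < δ) :
    ∀ᶠ n : ℕ in atTop, ∀ (M : ℝ), 0 ≤ M → M ≤ 2 ^ (n * (r + δ)) →
      ∀ (Q : (Fin n → Y) → ℝ), (∀ y, 0 ≤ Q y) → ∑ y, Q y ≤ 1 →
      ∀ (N : (Fin n → X) → (Fin n → Y) → ℝ), (∀ x y, N x y ≤ M * Q y) →
      ∃ x : Fin n → X, 1 / 2 * 2 ^ (-(n * (∑ i, lam i * Df w (R i) + δ))) ≤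
        ∑ y, if N x y ≤ 2 ^ (-(n * (∑ i, lam i * Jf w (R i) - r - 3 * δ))) * ∏ k, w (x k) (y k)
          then ∏ k, w (x k) (y k) else (0 : ℝ) := by
  set J := ∑ i, lam i * Jf w (R i) with hJ
  set D := ∑ i, lam i * Df w (R i) with hD
  let p : ι × X × Y → ℝ := fun z => lam z.1 * R z.1 z.2.1 z.2.2
  let g1 : ι × X × Y → ℝ := fun z => Real.logb 2 (w z.2.1 z.2.2 / mY (R z.1) z.2.2)
  let g2 : ι × X × Y → ℝ := fun z =>
    Real.logb 2 (R z.1 z.2.1 z.2.2 / (mX (R z.1) z.2.1 * w z.2.1 z.2.2))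
  have hp0 : ∀ a, 0 ≤ p a := fun a => mul_nonneg (hl0 _) ((hR _).nn _ _)
  have hp1 : ∑ a, p a = 1 := by
    simp only [p, Fintype.sum_prod_type, ← Finset.mul_sum]
    simp [(hR _).one, hl1]
  have hg1 : ∑ a, p a * g1 a = J := by
    simp only [p, g1, hJ, Jf, Fintype.sum_prod_type, Finset.mul_sum, mul_assoc]
  have hg2 : ∑ a, p a * g2 a = D := by
    simp only [p, g2, hD, Df, Fintype.sum_prod_type, Finset.mul_sum, mul_assoc]
  have hpow : ∀ᶠ n : ℕ in atTop, (2 : ℝ) ^ (-(n * δ)) < 1 / 8 := by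
    filter_upwards [pow_small δ hδ] with n hn
    exact hn
  filter_upwards [cheb p g1 hp0 hp1 J hg1 δ hδ, cheb p g2 hp0 hp1 D hg2 δ hδ, hpow]
    with n hb1 hb2 hb3 M hM0 hM Q hQ0 hQ1 N hN
  by_contra hcon
  push Not at hcon
  set F : (Fin n → X) → ℝ := fun x => ∑ y, if N x y ≤ 2 ^ (-(n * (J - r - 3 * δ))) *
    ∏ k, w (x k) (y k) then ∏ k, w (x k) (y k) else (0 : ℝ) with hF
  -- the four pieces
  let T3 : (Fin n → ι × X × Y) → ℝ := fun z => (∏ k, p (z k)) * (2 ^ (-(n * δ)) *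
    (Q (fun k => (z k).2.2) / ∏ k, mY (R (z k).1) (z k).2.2))
  let T4 : (Fin n → ι × X × Y) → ℝ := fun z => 2 ^ (n * (D + δ)) *
    ((∏ k, (lam (z k).1 * mX (R (z k).1) (z k).2.1)) *
      (if N (fun k => (z k).2.1) (fun k => (z k).2.2) ≤ 2 ^ (-(n * (J - r - 3 * δ))) *
        ∏ k, w (z k).2.1 (z k).2.2 then ∏ k, w (z k).2.1 (z k).2.2 else (0 : ℝ)))
  have hmX0 : ∀ i x, 0 ≤ mX (R i) x := fun i x => Finset.sum_nonneg fun y _ => (hR i).nn x y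
  have hmY0 : ∀ i y, 0 ≤ mY (R i) y := fun i y => Finset.sum_nonneg fun x _ => (hR i).nn x y
  have hT3s : ∑ z, T3 z < 1 / 8 := by
    refine lt_of_le_of_lt ?_ hb3
    rw [sum_triple]
    have e1 : ∀ u : Fin n → ι, (∑ x : Fin n → X, ∑ y : Fin n → Y, T3 (fun k => (u k, x k, y k)))
        ≤ (∏ k, lam (u k)) * 2 ^ (-(n * δ)) := by
      intro u
      rw [Finset.sum_comm]
      have e2 : ∀ y : Fin n → Y, ∑ x : Fin n → X, T3 (fun k => (u k, x k, y k)) ≤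
          (∏ k, lam (u k)) * 2 ^ (-(n * δ)) * Q y := by
        intro y
        simp only [T3, p]
        rw [← Finset.sum_mul, sum_prod_pi (fun k x => lam (u k) * R (u k) x (y k))]
        simp_rw [← Finset.mul_sum]
        rw [Finset.prod_mul_distrib]
        change (∏ k, lam (u k)) * (∏ k, mY (R (u k)) (y k)) * _ ≤ _
        have hl : 0 ≤ ∏ k, lam (u k) := Finset.prod_nonneg fun k _ => hl0 _
        have hm : 0 ≤ ∏ k, mY (R (u k)) (y k) := Finset.prod_nonneg fun k _ => hmY0 _ _
        rw [mul_assoc, mul_assoc]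
        refine mul_le_mul_of_nonneg_left ?_ hl
        rcases hm.eq_or_lt with h0 | h0
        · rw [← h0]; simp only [zero_mul]
          exact mul_nonneg (by positivity) (hQ0 y)
        · apply le_of_eq; field_simp
      refine (Finset.sum_le_sum fun y _ => e2 y).trans ?_
      rw [← Finset.mul_sum]
      have hl : 0 ≤ ∏ k, lam (u k) := Finset.prod_nonneg fun k _ => hl0 _
      exact mul_le_of_le_one_right (by positivity) hQ1
    refine (Finset.sum_le_sum fun u _ => e1 u).trans ?_
    rw [← Finset.sum_mul, sum_prod_pi (fun _ a => lam a)]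
    simp [hl1]
  have hT4s : ∑ z, T4 z ≤ 1 / 2 := by
    rw [sum_triple]
    have e1 : ∀ (u : Fin n → ι) (x : Fin n → X), ∑ y : Fin n → Y, T4 (fun k => (u k, x k, y k))
        ≤ (∏ k, (lam (u k) * mX (R (u k)) (x k))) * (1 / 2) := by
      intro u x
      simp only [T4]
      rw [← Finset.mul_sum, ← Finset.mul_sum]
      have h1 : F x < 1 / 2 * 2 ^ (-(n * (D + δ))) := hcon x
      have h2 : 0 ≤ ∏ k, (lam (u k) * mX (R (u k)) (x k)) :=
        Finset.prod_nonneg fun k _ => mul_nonneg (hl0 _) (hmX0 _ _)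
      calc _ = (∏ k, (lam (u k) * mX (R (u k)) (x k))) * (2 ^ (n * (D + δ)) * F x) := by
            simp only [hF]; ring
        _ ≤ (∏ k, (lam (u k) * mX (R (u k)) (x k))) *
              (2 ^ (n * (D + δ)) * (1 / 2 * 2 ^ (-(n * (D + δ))))) := by gcongr
        _ = _ := by
            rw [Real.rpow_neg (by norm_num)]
            have : (2 : ℝ) ^ (n * (D + δ)) ≠ 0 := by positivity
            field_simp
    refine (Finset.sum_le_sum fun u _ => Finset.sum_le_sum fun x _ => e1 u x).trans ?_
    simp_rw [← Finset.sum_mul]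
    have : ∀ u : Fin n → ι, ∑ x : Fin n → X, ∏ k, (lam (u k) * mX (R (u k)) (x k)) =
        ∏ k, lam (u k) := by
      intro u
      rw [sum_prod_pi (fun k x => lam (u k) * mX (R (u k)) x)]
      simp_rw [← Finset.mul_sum]
      simp [mX, (hR _).one]
    simp_rw [this]
    rw [sum_prod_pi (fun _ a => lam a)]
    simp [hl1]
  have hpt : ∀ z : Fin n → ι × X × Y, ∏ k, p (z k) ≤
      (if n * δ < |∑ k, g1 (z k) - n * J| then ∏ k, p (z k) else 0) +
      (if n * δ < |∑ k, g2 (z k) - n * D| then ∏ k, p (z k) else 0) + T3 z + T4 z := by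
    intro z
    have hpz : 0 ≤ ∏ k, p (z k) := Finset.prod_nonneg fun k _ => hp0 _
    have hC0 : 0 ≤ ∏ k, mY (R (z k).1) (z k).2.2 := Finset.prod_nonneg fun k _ => hmY0 _ _
    have hT30 : 0 ≤ T3 z :=
      mul_nonneg hpz (mul_nonneg (by positivity) (div_nonneg (hQ0 _) hC0))
    have hW0 : 0 ≤ ∏ k, w (z k).2.1 (z k).2.2 := Finset.prod_nonneg fun k _ => hw0 _ _
    have hT40 : 0 ≤ T4 z := by
      refine mul_nonneg (by positivity) (mul_nonneg
        (Finset.prod_nonneg fun k _ => mul_nonneg (hl0 _) (hmX0 _ _)) ?_)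
      split_ifs
      · exact hW0
      · exact le_rfl
    by_cases h1 : n * δ < |∑ k, g1 (z k) - n * J|
    · rw [if_pos h1]
      split_ifs <;> linarith
    rw [if_neg h1]
    by_cases h2 : n * δ < |∑ k, g2 (z k) - n * D|
    · rw [if_pos h2]; linarith
    rw [if_neg h2]
    push Not at h1 h2
    rcases hpz.eq_or_lt with hz | hz
    · linarith
    have hpk : ∀ k, 0 < p (z k) := fun k => by
      refine lt_of_le_of_ne (hp0 _) fun h => ?_
      rw [Finset.prod_eq_zero (Finset.mem_univ k) h.symm] at hz
      exact lt_irrefl _ hz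
    have hlk : ∀ k, 0 < lam (z k).1 := fun k =>
      lt_of_le_of_ne (hl0 _) fun h => by
        have := hpk k; simp only [p] at this; rw [← h] at this; simp at this
    have hRk : ∀ k, 0 < R (z k).1 (z k).2.1 (z k).2.2 := fun k =>
      lt_of_le_of_ne ((hR _).nn _ _) fun h => by
        have := hpk k; simp only [p] at this; rw [← h] at this; simp at this
    have hwk : ∀ k, 0 < w (z k).2.1 (z k).2.2 := fun k =>
      lt_of_le_of_ne (hw0 _ _) fun h => (hRk k).ne' ((hR _).supp _ _ h.symm)
    have hmXk : ∀ k, 0 < mX (R (z k).1) (z k).2.1 := fun k =>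
      lt_of_lt_of_le (hRk k) (Finset.single_le_sum
        (f := fun y => R (z k).1 (z k).2.1 y) (fun y _ => (hR _).nn _ _) (Finset.mem_univ _))
    have hmYk : ∀ k, 0 < mY (R (z k).1) (z k).2.2 := fun k =>
      lt_of_lt_of_le (hRk k) (Finset.single_le_sum
        (f := fun x => R (z k).1 x (z k).2.2) (fun y _ => (hR _).nn _ _) (Finset.mem_univ _))
    have hC : 0 < ∏ k, mY (R (z k).1) (z k).2.2 := Finset.prod_pos fun k _ => hmYk k
    have hWp : 0 < ∏ k, w (z k).2.1 (z k).2.2 := Finset.prod_pos fun k _ => hwk k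
    have k1 : (∏ k, w (z k).2.1 (z k).2.2) / ∏ k, mY (R (z k).1) (z k).2.2 =
        2 ^ (∑ k, g1 (z k)) := by
      rw [← Finset.prod_div_distrib, prod_eq_pow_sum_logb _ (fun k => div_pos (hwk k) (hmYk k))]
    have k2 : (∏ k, R (z k).1 (z k).2.1 (z k).2.2) /
        ((∏ k, mX (R (z k).1) (z k).2.1) * ∏ k, w (z k).2.1 (z k).2.2) =
        2 ^ (∑ k, g2 (z k)) := by
      rw [← Finset.prod_mul_distrib, ← Finset.prod_div_distrib, prod_eq_pow_sum_logb _
        (fun k => div_pos (hRk k) (mul_pos (hmXk k) (hwk k)))]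
    have k1' : (2 : ℝ) ^ (n * (J - δ)) ≤ 2 ^ (∑ k, g1 (z k)) :=
      Real.rpow_le_rpow_of_exponent_le (by norm_num) (by linarith [(abs_le.1 h1).1])
    have k2' : 2 ^ (∑ k, g2 (z k)) ≤ (2 : ℝ) ^ (n * (D + δ)) :=
      Real.rpow_le_rpow_of_exponent_le (by norm_num) (by linarith [(abs_le.1 h2).2])
    rw [← k1, le_div_iff₀ hC] at k1'
    rw [← k2, div_le_iff₀ (mul_pos (Finset.prod_pos fun k _ => hmXk k) hWp)] at k2'
    by_cases h3 : ∏ k, mY (R (z k).1) (z k).2.2 ≤ 2 ^ (-(n * δ)) * Q (fun k => (z k).2.2)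
    · have : ∏ k, p (z k) ≤ T3 z := by
        simp only [T3]
        apply le_mul_of_one_le_right hpz
        rw [← mul_div_assoc, one_le_div hC]
        exact h3
      linarith
    · push Not at h3
      have : ∏ k, p (z k) ≤ T4 z := by
        simp only [T4, p]
        rw [if_pos]
        · rw [Finset.prod_mul_distrib, Finset.prod_mul_distrib]
          calc _ ≤ (∏ k, lam (z k).1) * (2 ^ (n * (D + δ)) * ((∏ k, mX (R (z k).1) (z k).2.1) *
                ∏ k, w (z k).2.1 (z k).2.2)) :=
                mul_le_mul_of_nonneg_left k2' (Finset.prod_nonneg fun k _ => hl0 _)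
            _ = _ := by ring
        · have hQ' : Q (fun k => (z k).2.2) ≤ 2 ^ (n * δ) * ∏ k, mY (R (z k).1) (z k).2.2 := by
            rw [Real.rpow_neg (by norm_num), inv_mul_lt_iff₀ (by positivity)] at h3
            exact h3.le
          have hC' : ∏ k, mY (R (z k).1) (z k).2.2 ≤ 2 ^ (-(n * (J - δ))) *
              ∏ k, w (z k).2.1 (z k).2.2 := by
            rw [Real.rpow_neg (by norm_num), le_inv_mul_iff₀ (by positivity)]
            exact k1'
          calc N (fun k => (z k).2.1) (fun k => (z k).2.2) ≤ M * Q (fun k => (z k).2.2) := hN _ _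
            _ ≤ 2 ^ (n * (r + δ)) * (2 ^ (n * δ) * (2 ^ (-(n * (J - δ))) *
                  ∏ k, w (z k).2.1 (z k).2.2)) := by
                apply mul_le_mul hM (hQ'.trans _) (hQ0 _) (by positivity)
                gcongr
            _ = _ := by
                rw [← mul_assoc, ← mul_assoc, ← Real.rpow_add (by norm_num),
                  ← Real.rpow_add (by norm_num)]
                congr 2; ring
      linarith
  have htot : ∑ z : Fin n → ι × X × Y, ∏ k, p (z k) = 1 := by
    rw [sum_prod_pi (fun _ a => p a)]; simp [hp1]
  have hfin := Finset.sum_le_sum fun z (_ : z ∈ Finset.univ) => hpt z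
  simp only [Finset.sum_add_distrib] at hfin
  rw [htot] at hfin
  linarith

end RST

namespace RST

lemma tilt {X Y : Type*} [Fintype X] [Fintype Y] (p : X → ℝ) (hp0 : ∀ x, 0 ≤ p x)
    (hp1 : ∑ x, p x = 1) (w : X → Y → ℝ) (hw0 : ∀ x y, 0 ≤ w x y) (hw1 : ∀ x, ∑ y, w x y = 1)
    (t : ℝ) (ht : 0 < t) :
    ∃ (Q : Y → ℝ) (R : X → Y → ℝ), (∀ y, 0 ≤ Q y) ∧ ∑ y, Q y = 1 ∧
      (∀ x y, p x ≠ 0 → w x y ≠ 0 → 0 < Q y) ∧ IsJ w R ∧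
      0 < (∑ x, ∑ y, p x * w x y ^ (1 + t) * Q y ^ (-t)) ∧
      Real.logb 2 (∑ x, ∑ y, p x * w x y ^ (1 + t) * Q y ^ (-t)) ≤ t * Jf w R - Df w R := by
  set A : Y → ℝ := fun y => ∑ x, p x * w x y ^ (1 + t) with hA
  have hA0 : ∀ y, 0 ≤ A y := fun y => Finset.sum_nonneg fun x _ =>
    mul_nonneg (hp0 x) (Real.rpow_nonneg (hw0 x y) _)
  have hApos : ∀ x y, p x ≠ 0 → w x y ≠ 0 → 0 < A y := by
    intro x y hx hy
    have h1 : 0 < p x * w x y ^ (1 + t) := mul_pos (lt_of_le_of_ne (hp0 x) hx.symm)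
      (Real.rpow_pos_of_pos (lt_of_le_of_ne (hw0 x y) hy.symm) _)
    exact lt_of_lt_of_le h1 (Finset.single_le_sum (f := fun x => p x * w x y ^ (1 + t))
      (fun x _ => mul_nonneg (hp0 x) (Real.rpow_nonneg (hw0 x y) _)) (Finset.mem_univ x))
  set B : Y → ℝ := fun y => A y ^ (1 / (1 + t)) with hB
  have hB0 : ∀ y, 0 ≤ B y := fun y => Real.rpow_nonneg (hA0 y) _
  have hBpos : ∀ x y, p x ≠ 0 → w x y ≠ 0 → 0 < B y := fun x y hx hy =>
    Real.rpow_pos_of_pos (hApos x y hx hy) _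
  set S := ∑ y, B y with hS
  obtain ⟨x0, hx0⟩ : ∃ x, p x ≠ 0 := by
    by_contra h; push Not at h; simp [h] at hp1
  obtain ⟨y0, hy0⟩ : ∃ y, w x0 y ≠ 0 := by
    by_contra h; push Not at h; have := hw1 x0; simp [h] at this
  have hSpos : 0 < S := lt_of_lt_of_le (hBpos x0 y0 hx0 hy0)
    (Finset.single_le_sum (fun y _ => hB0 y) (Finset.mem_univ y0))
  set Q : Y → ℝ := fun y => B y / S with hQ
  have hQ0 : ∀ y, 0 ≤ Q y := fun y => div_nonneg (hB0 y) hSpos.le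
  have hQpos : ∀ x y, p x ≠ 0 → w x y ≠ 0 → 0 < Q y := fun x y hx hy =>
    div_pos (hBpos x y hx hy) hSpos
  have hQ1 : ∑ y, Q y = 1 := by
    simp only [hQ]; rw [← Finset.sum_div]; exact div_self hSpos.ne'
  have hcol : ∀ y, ∑ x, p x * w x y ^ (1 + t) * Q y ^ (-t) = S ^ (1 + t) * Q y := by
    intro y
    rw [← Finset.sum_mul]
    change A y * Q y ^ (-t) = _
    rcases (hA0 y).eq_or_lt with h | h
    · have : Q y = 0 := by
        simp only [hQ, hB, ← h]
        rw [Real.zero_rpow (by positivity)]; simp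
      rw [this, ← h]; simp
    · have hb : 0 < B y := Real.rpow_pos_of_pos h _
      have hq : 0 < Q y := div_pos hb hSpos
      have hAB : A y = (S * Q y) ^ (1 + t) := by
        have : S * Q y = B y := by simp only [hQ]; field_simp
        rw [this]; simp only [hB]
        rw [← Real.rpow_mul (hA0 y)]
        have : 1 / (1 + t) * (1 + t) = 1 := by field_simp
        rw [this, Real.rpow_one]
      rw [hAB, Real.mul_rpow hSpos.le hq.le, mul_assoc, ← Real.rpow_add hq]
      simp
  set Z := ∑ x, ∑ y, p x * w x y ^ (1 + t) * Q y ^ (-t) with hZ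
  have hZS : Z = S ^ (1 + t) := by
    rw [hZ, Finset.sum_comm]; simp_rw [hcol]; rw [← Finset.mul_sum, hQ1, mul_one]
  have hZpos : 0 < Z := by rw [hZS]; positivity
  set R : X → Y → ℝ := fun x y => p x * w x y ^ (1 + t) * Q y ^ (-t) / Z with hR
  have hR0 : ∀ x y, 0 ≤ R x y := fun x y => div_nonneg (mul_nonneg (mul_nonneg (hp0 x)
    (Real.rpow_nonneg (hw0 x y) _)) (Real.rpow_nonneg (hQ0 y) _)) hZpos.le
  have hR1 : ∑ x, ∑ y, R x y = 1 := by
    simp only [hR]; simp_rw [← Finset.sum_div]; exact div_self hZpos.ne'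
  have hRY : ∀ y, mY R y = Q y := by
    intro y
    simp only [mY, hR]; rw [← Finset.sum_div, hcol, hZS]
    rw [mul_div_assoc, mul_comm, div_mul_cancel₀]; positivity
  refine ⟨Q, R, hQ0, hQ1, hQpos, ⟨hR0, hR1, ?_⟩, hZpos, ?_⟩
  · intro x y h
    simp only [hR, h]
    rw [Real.zero_rpow (by positivity)]; simp
  have hmX0 : ∀ x, 0 ≤ mX R x := fun x => Finset.sum_nonneg fun y _ => hR0 x y
  have hexp : t * Jf w R - Df w R = ∑ x, ∑ y, R x y * (Real.logb 2 Z +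
      Real.logb 2 (mX R x / p x)) := by
    simp only [Jf, Df, Finset.mul_sum]
    rw [← Finset.sum_sub_distrib]
    refine Finset.sum_congr rfl fun x _ => ?_
    rw [← Finset.sum_sub_distrib]
    refine Finset.sum_congr rfl fun y _ => ?_
    rcases (hR0 x y).eq_or_lt with h | h
    · rw [← h]; ring
    have hpx : p x ≠ 0 := by
      intro h'; simp [hR, h'] at h
    have hwx : w x y ≠ 0 := by
      intro h'; simp only [hR, h'] at h
      rw [Real.zero_rpow (by positivity)] at h; simp at h
    have hp : 0 < p x := lt_of_le_of_ne (hp0 x) hpx.symm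
    have hw : 0 < w x y := lt_of_le_of_ne (hw0 x y) hwx.symm
    have hq := hQpos x y hpx hwx
    have hm : 0 < mX R x := lt_of_lt_of_le h (Finset.single_le_sum
      (f := fun y => R x y) (fun y _ => hR0 x y) (Finset.mem_univ y))
    have hlR : Real.logb 2 (R x y) = Real.logb 2 (p x) + (1 + t) * Real.logb 2 (w x y)
        - t * Real.logb 2 (Q y) - Real.logb 2 Z := by
      simp only [hR]
      rw [Real.logb_div (by positivity) hZpos.ne', Real.logb_mul (by positivity) (by positivity),
        Real.logb_mul (by positivity) (by positivity), Real.logb_rpow_eq_mul_logb_of_pos hw,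
        Real.logb_rpow_eq_mul_logb_of_pos hq]
      ring
    rw [hRY, Real.logb_div hwx hq.ne', Real.logb_div h.ne' (by positivity),
      Real.logb_mul hm.ne' hwx, Real.logb_div hm.ne' hpx, hlR]
    ring
  rw [hexp]
  simp_rw [mul_add, Finset.sum_add_distrib, ← Finset.sum_mul]
  rw [hR1, one_mul]
  change _ ≤ Real.logb 2 Z + ∑ x, mX R x * Real.logb 2 (mX R x / p x)
  have hg : ∀ x, (mX R x - p x) / Real.log 2 ≤ mX R x * Real.logb 2 (mX R x / p x) := by
    intro x
    have hl2 : 0 < Real.log 2 := Real.log_pos (by norm_num)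
    rw [div_le_iff₀ hl2, mul_assoc, Real.logb, div_mul_cancel₀ _ hl2.ne']
    rcases (hmX0 x).eq_or_lt with h | h
    · rw [← h]; simp; exact hp0 x
    · have hpx : 0 < p x := by
        refine lt_of_le_of_ne (hp0 x) fun h' => ?_
        simp [mX, hR, ← h'] at h
      have := Real.one_sub_inv_le_log_of_pos (div_pos h hpx)
      calc mX R x - p x = mX R x * (1 - (mX R x / p x)⁻¹) := by field_simp
        _ ≤ _ := mul_le_mul_of_nonneg_left this h.le
  have hs := Finset.sum_le_sum fun x (_ : x ∈ Finset.univ) => hg x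
  rw [← Finset.sum_div, Finset.sum_sub_distrib, hp1] at hs
  have : ∑ x, mX R x = 1 := hR1
  rw [this] at hs
  simp at hs
  linarith

lemma flat {X Y : Type*} [Fintype X] [Fintype Y] [Nonempty X] (w : X → Y → ℝ)
    (hw0 : ∀ x y, 0 ≤ w x y) (hw1 : ∀ x, ∑ y, w x y = 1) :
    ∃ (m : Y → ℝ) (R : X → Y → ℝ), (∀ y, 0 ≤ m y) ∧ (∀ x y, w x y ≤ m y) ∧
      0 < ∑ y, m y ∧ IsJ w R ∧ Jf w R = Real.logb 2 (∑ y, m y) := by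
  have hex : ∀ y, ∃ x0, ∀ x, w x y ≤ w x0 y := fun y => Finite.exists_max (fun x => w x y)
  choose f hf using hex
  set m : Y → ℝ := fun y => w (f y) y with hm
  set S := ∑ y, m y with hS
  have hm0 : ∀ y, 0 ≤ m y := fun y => hw0 _ _
  have hSpos : 0 < S := by
    obtain ⟨x⟩ := (inferInstance : Nonempty X)
    have : ∑ y, w x y ≤ S := Finset.sum_le_sum fun y _ => hf y x
    rw [hw1] at this; linarith
  let R : X → Y → ℝ := fun x y => if x = f y then m y / S else 0
  have hRY : ∀ y, mY R y = m y / S := fun y => by simp [mY, R]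
  refine ⟨m, R, hm0, fun x y => hf y x, hSpos, ⟨?_, ?_, ?_⟩, ?_⟩
  · intro x y
    simp only [R]; split_ifs
    · exact div_nonneg (hm0 y) hSpos.le
    · exact le_rfl
  · rw [Finset.sum_comm]
    simp only [R, Finset.sum_ite_eq', Finset.mem_univ, if_true]
    rw [← Finset.sum_div]; exact div_self hSpos.ne'
  · intro x y h
    simp only [R]; split_ifs with h2
    · subst h2; simp [hm, h]
    · rfl
  · have : ∀ x y, R x y * Real.logb 2 (w x y / mY R y) = R x y * Real.logb 2 S := by
      intro x y
      rw [hRY]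
      simp only [R]; split_ifs with h2
      · subst h2
        rcases (hm0 y).eq_or_lt with h | h
        · rw [← h]; simp
        · congr 2
          change m y / _ = _
          field_simp
      · simp
    simp only [Jf, this]
    simp_rw [← Finset.sum_mul]
    rw [Finset.sum_comm]
    simp only [R, Finset.sum_ite_eq', Finset.mem_univ, if_true]
    rw [← Finset.sum_div, div_self hSpos.ne', one_mul]

/-- Duality step. -/
lemma separation (S : Set (ℝ × ℝ)) (E : ℝ)
    (h1 : ∀ τ : ℝ, 0 ≤ τ → ∃ z ∈ S, z.2 - τ * z.1 < E) (h2 : ∃ z ∈ S, 0 < z.1) :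
    ∃ z ∈ convexHull ℝ S, 0 < z.1 ∧ z.2 < E := by
  by_contra hcon
  push Not at hcon
  have hconv : Convex ℝ (Set.Ioi (0 : ℝ) ×ˢ Set.Iio E) := (convex_Ioi 0).prod (convex_Iio E)
  have hopen : IsOpen (Set.Ioi (0 : ℝ) ×ˢ Set.Iio E) := isOpen_Ioi.prod isOpen_Iio
  have hdisj : Disjoint (Set.Ioi (0 : ℝ) ×ˢ Set.Iio E) (convexHull ℝ S) := by
    rw [Set.disjoint_left]
    rintro z ⟨ha, hb⟩ hz
    exact absurd (hcon z hz ha) (not_le.2 hb)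
  obtain ⟨f, c, hf1, hf2⟩ := geometric_hahn_banach_open hconv hopen (convex_convexHull ℝ S) hdisj
  set a := f (1, 0)
  set b := f (0, 1)
  have hf : ∀ u v : ℝ, f (u, v) = a * u + b * v := by
    intro u v
    have : ((u, v) : ℝ × ℝ) = u • (1, 0) + v • (0, 1) := by simp
    rw [this, map_add, map_smul, map_smul]; simp only [smul_eq_mul]; ring
  have hf1' : ∀ u v : ℝ, 0 < u → v < E → a * u + b * v < c := fun u v hu hv => by
    rw [← hf]; exact hf1 _ ⟨hu, hv⟩
  have hf2' : ∀ z ∈ S, c ≤ a * z.1 + b * z.2 := fun z hz => by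
    rw [← hf]; exact hf2 _ (subset_convexHull ℝ S hz)
  have hb : 0 ≤ b := by
    by_contra hb
    push Not at hb
    have h := hf1' 1 (min (E - 1) ((c - a) / b)) one_pos (by
      have := min_le_left (E - 1) ((c - a) / b); linarith)
    have h3 : b * ((c - a) / b) ≤ b * min (E - 1) ((c - a) / b) :=
      mul_le_mul_of_nonpos_left (min_le_right _ _) hb.le
    rw [mul_div_cancel₀ _ hb.ne] at h3
    linarith
  have ha : a ≤ 0 := by
    by_contra ha
    push Not at ha
    have h := hf1' (max 1 ((c - b * (E - 1)) / a)) (E - 1)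
      (lt_of_lt_of_le one_pos (le_max_left _ _)) (by linarith)
    have h3 : a * ((c - b * (E - 1)) / a) ≤ a * max 1 ((c - b * (E - 1)) / a) :=
      mul_le_mul_of_nonneg_left (le_max_right _ _) ha.le
    rw [mul_div_cancel₀ _ ha.ne'] at h3
    linarith
  -- limit to the corner
  have hc : b * E ≤ c := by
    by_contra h
    push Not at h
    have hden : 0 < (1 + |a| + b) := by positivity
    set η := (b * E - c) / (1 + |a| + b) / 2 with hη
    have hηp : 0 < η := by
      have : 0 < b * E - c := by linarith
      positivity
    have h4 := hf1' η (E - η) hηp (by linarith)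
    have h5 : η * (1 + |a| + b) = (b * E - c) / 2 := by rw [hη]; field_simp
    have h6 : -|a| ≤ a := neg_abs_le a
    nlinarith
  rcases hb.eq_or_lt with hb0 | hbpos
  · obtain ⟨z, hz, hzu⟩ := h2
    have h3 := hf2' z hz
    rw [← hb0] at h3 hc
    have ha0 : a ≠ 0 := by
      intro h0
      have := hf1' 1 (E - 1) one_pos (by linarith)
      rw [h0, ← hb0] at this
      rw [h0] at h3
      linarith
    have : a < 0 := lt_of_le_of_ne ha ha0
    nlinarith
  · obtain ⟨z, hz, hzE⟩ := h1 (-a / b) (div_nonneg (by linarith) hb)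
    have h3 := hf2' z hz
    have : b * (z.2 - -a / b * z.1) = b * z.2 + a * z.1 := by field_simp; ring
    have h5 := mul_lt_mul_of_pos_left hzE hbpos
    linarith

end RST

namespace RST

lemma le_elog2 (a : ℝ) (s : ℝ≥0∞) (h : ENNReal.ofReal (2 ^ a) ≤ s) : (a : EReal) ≤ elog2 s := by
  have hpos : (0 : ℝ) < 2 ^ a := by positivity
  unfold elog2
  split_ifs with h0 h1
  · rw [h0] at h
    have := ENNReal.ofReal_eq_zero.1 (le_antisymm h bot_le)
    linarith
  · exact le_top
  · rw [EReal.coe_le_coe_iff]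
    have h2 := (ENNReal.ofReal_le_iff_le_toReal h1).1 h
    rw [Real.le_logb_iff_rpow_le (by norm_num) (lt_of_lt_of_le hpos h2)]
    exact h2

lemma elog2_le (a : ℝ) (s : ℝ≥0∞) (h : s ≤ ENNReal.ofReal (2 ^ a)) : elog2 s ≤ (a : EReal) := by
  unfold elog2
  split_ifs with h0 h1
  · exact bot_le
  · rw [h1] at h; exact absurd h (by simp)
  · rw [EReal.coe_le_coe_iff]
    have h2 := ENNReal.toReal_le_of_le_ofReal (by positivity) h
    rw [Real.logb_le_iff_le_rpow (by norm_num) (ENNReal.toReal_pos h0 h1)]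
    exact h2

lemma channel_ne_top {X Y : Type*} [Fintype Y] (W : X → Y → ℝ≥0∞)
    (hW : ∀ x, ∑ y, W x y = 1) (x : X) (y : Y) : W x y ≠ ⊤ := by
  have : W x y ≤ 1 := by
    rw [← hW x]; exact Finset.single_le_sum (f := fun y => W x y) (fun _ _ => bot_le)
      (Finset.mem_univ y)
  exact ne_top_of_le_ne_top (by simp) this

lemma dist_ne_top {Y : Type*} [Fintype Y] (P : Y → ℝ≥0∞)
    (hP : ∑ y, P y = 1) (y : Y) : P y ≠ ⊤ :=
  channel_ne_top (fun _ : Unit => P) (fun _ => hP) () y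

lemma dist_toReal {Y : Type*} [Fintype Y] (P : Y → ℝ≥0∞)
    (hP : ∑ y, P y = 1) : ∑ y, (P y).toReal = 1 := by
  rw [← ENNReal.toReal_sum (fun y _ => dist_ne_top P hP y), hP]; simp

lemma margX_joint {X Y : Type*} [Fintype X] [Fintype Y] (P : X → ℝ≥0∞) (W : X → Y → ℝ≥0∞)
    (hW : IsChannel W) (x : X) : margX (joint P W) x = P x := by
  simp only [margX, joint]
  rw [← Finset.mul_sum, hW x, mul_one]

/-- Rényi capacity at order `1+t` is approximated by a tilted joint law. -/
lemma cap_tilt {X Y : Type*} [Fintype X] [Fintype Y] (W : X → Y → ℝ≥0∞) (hW : IsChannel W)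
    (t : ℝ) (ht : 0 < t) (a : ℝ) (ha : (a : EReal) < renyiCap (1 + ENNReal.ofReal t) W) :
    ∃ R : X → Y → ℝ, IsJ (fun x y => (W x y).toReal) R ∧
      t * a ≤ t * Jf (fun x y => (W x y).toReal) R - Df (fun x y => (W x y).toReal) R := by
  unfold renyiCap at ha
  obtain ⟨⟨P, hP⟩, hPa⟩ := lt_iSup_iff.1 ha
  simp only at hPa
  have hP' : ∑ x, P x = 1 := hP
  obtain ⟨Q, R, hQ0, hQ1, hQpos, hR, hZ, hlog⟩ := tilt (fun x => (P x).toReal)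
    (fun _ => ENNReal.toReal_nonneg) (dist_toReal P hP') (fun x y => (W x y).toReal)
    (fun _ _ => ENNReal.toReal_nonneg) (fun x => dist_toReal _ (hW x)) t ht
  refine ⟨R, hR, ?_⟩
  refine le_trans ?_ hlog
  set Z := ∑ x, ∑ y, (P x).toReal * (W x y).toReal ^ (1 + t) * Q y ^ (-t) with hZdef
  have hQd : IsDist (fun y => ENNReal.ofReal (Q y)) := by
    unfold IsDist
    rw [← ENNReal.ofReal_sum_of_nonneg (fun y _ => hQ0 y), hQ1]; simp
  have hle : renyiMI (1 + ENNReal.ofReal t) (joint P W) ≤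
      renyiD (1 + ENNReal.ofReal t) (joint P W)
        (fun p => margX (joint P W) p.1 * ENNReal.ofReal (Q p.2)) :=
    iInf_le (fun Q : {Q : Y → ℝ≥0∞ // IsDist Q} => renyiD (1 + ENNReal.ofReal t) (joint P W)
      fun p => margX (joint P W) p.1 * Q.1 p.2) ⟨_, hQd⟩
  have htpos : ENNReal.ofReal t ≠ 0 := by simp [ht]
  have htr : (1 + ENNReal.ofReal t).toReal = 1 + t := by
    rw [ENNReal.toReal_add (by simp) (by simp), ENNReal.toReal_ofReal ht.le]; simp
  have hD : renyiD (1 + ENNReal.ofReal t) (joint P W)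
        (fun p => margX (joint P W) p.1 * ENNReal.ofReal (Q p.2)) ≤
        ((t⁻¹ * Real.logb 2 Z : ℝ) : EReal) := by
    unfold renyiD
    rw [if_neg (by simp), if_neg (by simpa using ht), if_neg (by simp), htr]
    have e1 : (1 + t - 1) = t := by ring
    have e2 : (1 - (1 + t)) = -t := by ring
    rw [e1, e2, EReal.coe_mul]
    refine mul_le_mul_of_nonneg_left ?_ (by exact_mod_cast (inv_nonneg.2 ht.le))
    apply elog2_le
    rw [Real.rpow_logb (by norm_num) (by norm_num) hZ, hZdef, Fintype.sum_prod_type]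
    rw [ENNReal.ofReal_sum_of_nonneg]
    swap
    · intro x _
      refine Finset.sum_nonneg fun y _ => ?_
      have := hQ0 y
      positivity
    refine Finset.sum_le_sum fun x _ => ?_
    rw [ENNReal.ofReal_sum_of_nonneg]
    swap
    · intro y _
      have := hQ0 y
      positivity
    refine Finset.sum_le_sum fun y _ => ?_
    simp only
    rw [margX_joint P W hW]
    simp only [joint]
    have hPt := dist_ne_top P hP' x
    have hWt := channel_ne_top W hW x y
    by_cases hp : P x = 0
    · simp only [hp, zero_mul]
      rw [ENNReal.zero_rpow_of_pos (by linarith)]; simp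
    by_cases hw : W x y = 0
    · simp only [hw, mul_zero]
      rw [ENNReal.zero_rpow_of_pos (by linarith)]; simp
    have hpr : 0 < (P x).toReal := ENNReal.toReal_pos hp hPt
    have hwr : 0 < (W x y).toReal := ENNReal.toReal_pos hw hWt
    have hq := hQpos x y hpr.ne' hwr.ne'
    apply le_of_eq
    conv_lhs => rw [← ENNReal.ofReal_toReal hPt, ← ENNReal.ofReal_toReal hWt]
    rw [← ENNReal.ofReal_mul hpr.le, ← ENNReal.ofReal_mul hpr.le,
      ENNReal.ofReal_rpow_of_pos (by positivity), ENNReal.ofReal_rpow_of_pos (by positivity),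
      ← ENNReal.ofReal_mul (by positivity)]
    congr 1
    rw [Real.mul_rpow hpr.le hwr.le, Real.mul_rpow hpr.le hq.le]
    have : (P x).toReal ^ (1 + t) * (P x).toReal ^ (-t) = (P x).toReal := by
      rw [← Real.rpow_add hpr]; simp
    calc _ = ((P x).toReal ^ (1 + t) * (P x).toReal ^ (-t)) * (W x y).toReal ^ (1 + t) * Q y ^ (-t) := by ring
      _ = _ := by rw [this]
  have := (hPa.trans_le (hle.trans hD)).le
  rw [EReal.coe_le_coe_iff] at this
  have h3 := mul_le_mul_of_nonneg_left this ht.le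
  rwa [← mul_assoc, mul_inv_cancel₀ ht.ne', one_mul] at h3

lemma cap_flat {X Y : Type*} [Fintype X] [Fintype Y] [Nonempty X] (W : X → Y → ℝ≥0∞)
    (hW : IsChannel W) (r : ℝ) (hr : (r : EReal) < renyiCap ⊤ W) :
    ∃ R : X → Y → ℝ, IsJ (fun x y => (W x y).toReal) R ∧
      r < Jf (fun x y => (W x y).toReal) R := by
  obtain ⟨m, R, hm0, hwm, hS, hR, hJ⟩ := flat (fun x y => (W x y).toReal)
    (fun _ _ => ENNReal.toReal_nonneg) (fun x => dist_toReal _ (hW x))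
  refine ⟨R, hR, ?_⟩
  rw [hJ]
  set S := ∑ y, m y
  unfold renyiCap at hr
  obtain ⟨⟨P, hP⟩, hPa⟩ := lt_iSup_iff.1 hr
  simp only at hPa
  have hP' : ∑ x, P x = 1 := hP
  have hQd : IsDist (fun y => ENNReal.ofReal (m y / S)) := by
    unfold IsDist
    rw [← ENNReal.ofReal_sum_of_nonneg (fun y _ => div_nonneg (hm0 y) hS.le), ← Finset.sum_div,
      div_self hS.ne']; simp
  have hle : renyiMI ⊤ (joint P W) ≤
      renyiD ⊤ (joint P W)
        (fun p => margX (joint P W) p.1 * ENNReal.ofReal (m p.2 / S)) :=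
    iInf_le (fun Q : {Q : Y → ℝ≥0∞ // IsDist Q} => renyiD ⊤ (joint P W)
      fun p => margX (joint P W) p.1 * Q.1 p.2) ⟨_, hQd⟩
  have hD : renyiD ⊤ (joint P W)
        (fun p => margX (joint P W) p.1 * ENNReal.ofReal (m p.2 / S)) ≤
        ((Real.logb 2 S : ℝ) : EReal) := by
    unfold renyiD
    rw [if_neg (by simp), if_neg (by simp), if_pos rfl]
    apply elog2_le
    rw [Real.rpow_logb (by norm_num) (by norm_num) hS]
    refine iSup_le fun z => ?_
    beta_reduce
    rw [margX_joint P W hW]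
    simp only [joint]
    apply ENNReal.div_le_of_le_mul
    rw [mul_left_comm, ← ENNReal.ofReal_mul hS.le, mul_div_cancel₀ _ hS.ne']
    gcongr
    rw [← ENNReal.ofReal_toReal (channel_ne_top W hW z.1 z.2)]
    exact ENNReal.ofReal_le_ofReal (hwm _ _)
  have := hPa.trans_le (hle.trans hD)
  exact_mod_cast this

/-- A simulation is dominated by `M` times a distribution, and is a channel. -/
lemma sim_dom {X Y : Type*} [Fintype X] [Fintype Y] (c : ℝ) (N : X → Y → ℝ≥0∞)
    (hN : IsSimulation c N) :
    IsChannel N ∧ ∃ (M : ℝ) (Q : Y → ℝ), 0 ≤ M ∧ M ≤ 2 ^ c ∧ (∀ y, 0 ≤ Q y) ∧ ∑ y, Q y ≤ 1 ∧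
      ∀ x y, (N x y).toReal ≤ M * Q y := by
  obtain ⟨m, M, PK, E, D, hM, hMc, hPK, hE, hD, hNe⟩ := hN
  have hch : IsChannel N := by
    intro x
    simp_rw [hNe]
    rw [Finset.sum_comm]
    calc ∑ k, ∑ y, ∑ j, PK k * E x k j * D j k y = ∑ k, PK k := by
          refine Finset.sum_congr rfl fun k _ => ?_
          rw [Finset.sum_comm]
          simp_rw [← Finset.mul_sum, hD, mul_one]
          rw [← Finset.mul_sum, hE, mul_one]
      _ = 1 := hPK
  refine ⟨hch, M, fun y => (∑ k, ∑ j, PK k * D j k y).toReal / M, by positivity, ?_,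
    fun y => by positivity, ?_, ?_⟩
  · rw [← Real.logb_le_iff_le_rpow (by norm_num) (by exact_mod_cast hM)]; exact hMc
  all_goals
    have hs : ∑ y, ∑ k, ∑ j, PK k * D j k y = M := by
      rw [Finset.sum_comm]
      calc ∑ k, ∑ y, ∑ j, PK k * D j k y = ∑ k, PK k * M := by
            refine Finset.sum_congr rfl fun k _ => ?_
            rw [Finset.sum_comm]
            simp_rw [← Finset.mul_sum, hD]
            simp
        _ = M := by rw [← Finset.sum_mul, hPK, one_mul]
    have hfin : ∀ y, ∑ k, ∑ j, PK k * D j k y ≠ ⊤ := fun y => by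
      refine ne_top_of_le_ne_top (ENNReal.natCast_ne_top M) ?_
      rw [← hs]
      exact Finset.single_le_sum (f := fun y => ∑ k, ∑ j, PK k * D j k y) (fun _ _ => bot_le)
        (Finset.mem_univ y)
    have hMr : (0 : ℝ) < M := by exact_mod_cast hM
  · rw [← Finset.sum_div, ← ENNReal.toReal_sum (fun y _ => hfin y), hs]
    simp [hMr.ne']
  · intro x y
    rw [mul_div_cancel₀ _ hMr.ne']
    apply ENNReal.toReal_mono (hfin y)
    rw [hNe]
    refine Finset.sum_le_sum fun k _ => Finset.sum_le_sum fun j _ => ?_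
    gcongr
    refine mul_le_of_le_one_right' ?_
    rw [← hE x k]
    exact Finset.single_le_sum (f := fun j => E x k j) (fun _ _ => bot_le) (Finset.mem_univ j)

lemma prodCh_channel {X Y : Type*} [Fintype X] [Fintype Y] (W : X → Y → ℝ≥0∞)
    (hW : IsChannel W) (n : ℕ) : IsChannel (prodCh n W) := by
  intro xs
  simp only [prodCh]
  have := Finset.prod_univ_sum (fun _ : Fin n => (Finset.univ : Finset Y)) (fun i y => W (xs i) y)
  rw [Fintype.piFinset_univ] at this
  rw [← this]
  simp [hW _]

/-- Combined statement for simulations. -/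
lemma sim_core {ι X Y : Type*} [Fintype ι] [Fintype X] [Fintype Y] (W : X → Y → ℝ≥0∞)
    (lam : ι → ℝ) (hl0 : ∀ i, 0 ≤ lam i)
    (hl1 : ∑ i, lam i = 1) (R : ι → X → Y → ℝ)
    (hR : ∀ i, IsJ (fun x y => (W x y).toReal) (R i)) (r δ : ℝ) (hδ : 0 < δ) (J D : ℝ)
    (hJ : ∑ i, lam i * Jf (fun x y => (W x y).toReal) (R i) = J)
    (hD : ∑ i, lam i * Df (fun x y => (W x y).toReal) (R i) = D) :
    ∀ᶠ n : ℕ in atTop, ∀ c : ℝ, c ≤ n * (r + δ) → ∀ N : (Fin n → X) → (Fin n → Y) → ℝ≥0∞,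
      IsSimulation c N → ∃ x, 1 / 2 * (2 : ℝ) ^ (-(n * (D + δ))) ≤
        ∑ y, if (N x y).toReal ≤ 2 ^ (-(n * (J - r - 3 * δ))) * (prodCh n W x y).toReal
          then (prodCh n W x y).toReal else (0 : ℝ) := by
  have := core (fun x y => (W x y).toReal) (fun _ _ => ENNReal.toReal_nonneg) lam hl0 hl1 R hR r δ hδ
  filter_upwards [this] with n hn c hc N hN
  obtain ⟨_, M, Q, hM0, hM, hQ0, hQ1, hNQ⟩ := sim_dom c N hN
  obtain ⟨x, hx⟩ := hn M hM0 (hM.trans (Real.rpow_le_rpow_of_exponent_le (by norm_num) hc)) Q hQ0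
    hQ1 (fun x y => (N x y).toReal) hNQ
  refine ⟨x, ?_⟩
  rw [hJ, hD] at hx
  have he : ∀ y, (prodCh n W x y).toReal = ∏ k, (W (x k) (y k)).toReal := fun y => by
    simp [prodCh, ENNReal.toReal_prod]
  simp_rw [he]
  exact hx

end RST

namespace RST
universe u

lemma coe_sum_EReal {ι : Type*} (t : Finset ι) (f : ι → ℝ) :
    ((∑ i ∈ t, f i : ℝ) : EReal) = ∑ i ∈ t, (f i : EReal) := by
  induction t using Finset.induction_on with
  | empty => simp
  | insert a t ha ih => rw [Finset.sum_insert ha, Finset.sum_insert ha, EReal.coe_add, ih]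

lemma pt_lt_one (α : ℝ) (h0 : 0 < α) (h1 : α < 1) : ∃ c : ℝ, 0 < c ∧ ∀ θ v q : ℝ, θ ≤ 1 / 2 →
    0 ≤ v → 0 ≤ q →
    v ^ α * q ^ (1 - α) ≤ α * v + (1 - α) * q - c * (if q ≤ θ * v then v else 0) := by
  set k : ℝ := (1 / 2) ^ (1 - α) with hk
  have hk1 : k < (1 + α) / 2 := by
    have := rpow_one_add_lt_one_add_mul_self (s := -1 / 2) (by norm_num) (by norm_num)
      (p := 1 - α) (by linarith) (by linarith)
    have e : (1 + -1 / 2 : ℝ) = 1 / 2 := by norm_num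
    rw [e] at this
    linarith
  have hk2 : 1 / 2 ≤ k := by
    have := Real.rpow_le_rpow_of_exponent_ge (x := 1 / 2) (by norm_num) (by norm_num)
      (show 1 - α ≤ 1 by linarith)
    rwa [Real.rpow_one] at this
  refine ⟨(1 + α) / 2 - k, by linarith, ?_⟩
  intro θ v q hθ hv hq
  have hb := Real.geom_mean_le_arith_mean2_weighted h0.le (sub_nonneg.2 h1.le) hv hq (by ring)
  split_ifs with h
  · have hq2 : q ≤ v / 2 := by nlinarith
    have hb2 := Real.geom_mean_le_arith_mean2_weighted h0.le (sub_nonneg.2 h1.le) hv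
      (show 0 ≤ 2 * q by linarith) (by ring)
    have e : v ^ α * q ^ (1 - α) = k * (v ^ α * (2 * q) ^ (1 - α)) := by
      have : q ^ (1 - α) = k * (2 * q) ^ (1 - α) := by
        rw [hk, ← Real.mul_rpow (by norm_num) (by linarith)]; congr 1; ring
      rw [this]; ring
    rw [e]
    have hk0 : 0 ≤ k := by linarith
    have := mul_le_mul_of_nonneg_left hb2 hk0
    refine this.trans ?_
    nlinarith [mul_nonneg (mul_nonneg (sub_nonneg.2 h1.le) (sub_nonneg.2 hk2)) (sub_nonneg.2 hq2)]
  · linarith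

lemma pt_gt_one (s : ℝ) (hs : 0 < s) : ∃ c : ℝ, 0 < c ∧ ∀ θ v q : ℝ, 0 < θ → θ ≤ 1 / 2 →
    0 ≤ v → 0 ≤ q → (v ≠ 0 → q ≠ 0) →
    (1 + s) * v - s * q + c * θ ^ (-s) * (if q ≤ θ * v then v else 0) ≤ v ^ (1 + s) * q ^ (-s) := by
  set k : ℝ := 2 ^ s with hk
  have hk1 : 1 + s / 2 < k := by
    rw [hk, Real.rpow_def_of_pos (by norm_num)]
    have h1 := Real.add_one_le_exp (Real.log 2 * s)
    have h2 := Real.log_two_gt_d9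
    nlinarith
  have hk0 : 0 < k := by positivity
  have hc1 : (1 + s / 2) / k < 1 := by rw [div_lt_one hk0]; exact hk1
  have bern : ∀ v q : ℝ, 0 ≤ v → 0 < q → (1 + s) * v - s * q ≤ v ^ (1 + s) * q ^ (-s) := by
    intro v q hv hq
    have h := one_add_mul_self_le_rpow_one_add (s := v / q - 1)
      (by have : 0 ≤ v / q := by positivity
          linarith) (p := 1 + s) (by linarith)
    have e : (1 + (v / q - 1)) = v / q := by ring
    rw [e, Real.div_rpow hv hq.le] at h
    have h2 := mul_le_mul_of_nonneg_right h hq.le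
    have e2 : v ^ (1 + s) / q ^ (1 + s) * q = v ^ (1 + s) * q ^ (-s) := by
      rw [Real.rpow_neg hq.le, Real.rpow_add hq, Real.rpow_one]; field_simp
    rw [e2] at h2
    have e3 : (1 + (1 + s) * (v / q - 1)) * q = (1 + s) * v - s * q := by field_simp; ring
    rwa [e3] at h2
  refine ⟨1 - (1 + s / 2) / k, by linarith, ?_⟩
  intro θ v q hθ0 hθ hv hq hvq
  rcases hv.eq_or_lt with hv0 | hv0
  · rw [← hv0, Real.zero_rpow (by positivity)]
    simp; positivity
  have hq0 : 0 < q := lt_of_le_of_ne hq (hvq hv0.ne').symm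
  split_ifs with h
  · have hq2 : 2 * q ≤ v := by nlinarith
    have hb := bern v (2 * q) hv (by linarith)
    set L := v ^ (1 + s) * q ^ (-s) with hL
    have e : v ^ (1 + s) * (2 * q) ^ (-s) = L / k := by
      rw [hL, hk, Real.mul_rpow (by norm_num) hq, Real.rpow_neg (by norm_num : (0:ℝ) ≤ 2)]
      field_simp
    rw [e] at hb
    have hLθ : θ ^ (-s) * v ≤ L := by
      have : v ^ (1 + s) * q ^ (-s) = (q / v) ^ (-s) * v := by
        rw [Real.div_rpow hq hv, Real.rpow_add hv0, Real.rpow_one, Real.rpow_neg hv]; field_simp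
      rw [hL, this]
      refine mul_le_mul_of_nonneg_right ?_ hv
      apply Real.rpow_le_rpow_of_nonpos (by positivity) _ (by linarith)
      rw [div_le_iff₀ hv0]; exact h
    have h5 : (1 + s / 2) * ((1 + s) * v - s * (2 * q)) ≤ (1 + s / 2) / k * L := by
      calc _ ≤ (1 + s / 2) * (L / k) := by gcongr
        _ = _ := by ring
    have h6 : (1 - (1 + s / 2) / k) * (θ ^ (-s) * v) ≤ (1 - (1 + s / 2) / k) * L :=
      mul_le_mul_of_nonneg_left hLθ (by linarith)
    have h7 : (1 + s) * v - s * q ≤ (1 + s / 2) * ((1 + s) * v - s * (2 * q)) := by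
      nlinarith [mul_nonneg (mul_nonneg hs.le (show 0 ≤ 1 + s by linarith)) (sub_nonneg.2 hq2)]
    nlinarith
  · simpa using bern v q hv hq0


/-- mass of the set where `Q ≤ θ P`. -/
def massB {Y : Type u} [Fintype Y] (θ : ℝ) (P Q : Y → ℝ≥0∞) : ℝ :=
  ∑ y, if (Q y).toReal ≤ θ * (P y).toReal then (P y).toReal else (0 : ℝ)

lemma massB_nonneg {Y : Type u} [Fintype Y] (θ : ℝ) (P Q : Y → ℝ≥0∞) : 0 ≤ massB θ P Q := by
  refine Finset.sum_nonneg fun y _ => ?_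
  split_ifs
  · exact ENNReal.toReal_nonneg
  · exact le_rfl

lemma hell (α : ℝ) (h0 : 0 < α) (h1 : α < 1) : ∃ c : ℝ, 0 < c ∧ ∀ {Y : Type u} [Fintype Y] (θ : ℝ) (P Q : Y → ℝ≥0∞),
    θ ≤ 1 / 2 → ∑ y, P y = 1 → ∑ y, Q y = 1 →
    ∑ y, (P y).toReal ^ α * (Q y).toReal ^ (1 - α) ≤ 1 - c * massB θ P Q := by
  obtain ⟨c, hc, h⟩ := pt_lt_one α h0 h1
  refine ⟨c, hc, fun {Y} _ θ P Q hθ hP hQ => ?_⟩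
  refine (Finset.sum_le_sum fun y _ => h θ (P y).toReal (Q y).toReal hθ ENNReal.toReal_nonneg
    ENNReal.toReal_nonneg).trans ?_
  rw [Finset.sum_sub_distrib, Finset.sum_add_distrib, ← Finset.mul_sum, ← Finset.mul_sum,
    ← Finset.mul_sum, dist_toReal P hP, dist_toReal Q hQ]
  unfold massB
  linarith

lemma div_lt_one' (α : ℝ) (h0 : 0 < α) (h1 : α < 1) : ∃ c : ℝ, 0 < c ∧
    ∀ {Y : Type u} [Fintype Y] (θ : ℝ) (P Q : Y → ℝ≥0∞),
    θ ≤ 1 / 2 → ∑ y, P y = 1 → ∑ y, Q y = 1 →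
    ((c * massB θ P Q : ℝ) : EReal) ≤ renyiD (ENNReal.ofReal α) P Q := by
  obtain ⟨c, hc, h⟩ := hell.{u} α h0 h1
  have hl2 : 0 < Real.log 2 := Real.log_pos (by norm_num)
  have h1a : 0 < 1 - α := by linarith
  refine ⟨(1 - α)⁻¹ * (c / Real.log 2), by positivity, fun {Y} _ θ P Q hθ hP hQ => ?_⟩
  have hS := h θ P Q hθ hP hQ
  unfold renyiD
  rw [if_neg (by simpa using h0), if_neg (by
    rw [ENNReal.ofReal_eq_one]; exact h1.ne), if_neg (by simp), ENNReal.toReal_ofReal h0.le]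
  have hel : elog2 (∑ x, P x ^ α * Q x ^ (1 - α)) ≤
      ((-(c / Real.log 2 * massB θ P Q) : ℝ) : EReal) := by
    apply elog2_le
    have : (2 : ℝ) ^ (-(c / Real.log 2 * massB θ P Q)) = Real.exp (-(c * massB θ P Q)) := by
      rw [Real.rpow_def_of_pos (by norm_num)]; congr 1; field_simp
    rw [this]
    have hfin : ∀ y, P y ^ α * Q y ^ (1 - α) ≠ ⊤ := fun y => ENNReal.mul_ne_top
      (ENNReal.rpow_ne_top_of_nonneg h0.le (dist_ne_top P hP y))
      (ENNReal.rpow_ne_top_of_nonneg h1a.le (dist_ne_top Q hQ y))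
    rw [ENNReal.le_ofReal_iff_toReal_le (by rw [ENNReal.sum_ne_top]; exact fun y _ => hfin y)
      (Real.exp_nonneg _), ENNReal.toReal_sum (fun y _ => hfin y)]
    simp_rw [ENNReal.toReal_mul, ← ENNReal.toReal_rpow]
    refine hS.trans ?_
    have := Real.add_one_le_exp (-(c * massB θ P Q))
    linarith
  have e : (α - 1)⁻¹ = -(1 - α)⁻¹ := by rw [← neg_sub, inv_neg]
  rw [e, EReal.coe_neg, neg_mul, EReal.le_neg]
  have : (0 : EReal) ≤ (((1 - α)⁻¹ : ℝ) : EReal) := by exact_mod_cast (inv_nonneg.2 h1a.le)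
  refine (mul_le_mul_of_nonneg_left hel this).trans (le_of_eq ?_)
  rw [← EReal.coe_mul, ← EReal.coe_neg]
  congr 1; ring

lemma div_one' : ∃ c : ℝ, 0 < c ∧
    ∀ {Y : Type u} [Fintype Y] (θ : ℝ) (P Q : Y → ℝ≥0∞),
    θ ≤ 1 / 2 → ∑ y, P y = 1 → ∑ y, Q y = 1 →
    ((c * massB θ P Q : ℝ) : EReal) ≤ renyiD 1 P Q := by
  obtain ⟨c, hc, h⟩ := hell.{u} (1 / 2) (by norm_num) (by norm_num)
  have hl2 : 0 < Real.log 2 := Real.log_pos (by norm_num)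
  refine ⟨2 / Real.log 2 * c, by positivity, fun {Y} _ θ P Q hθ hP hQ => ?_⟩
  have hS := h θ P Q hθ hP hQ
  unfold renyiD
  rw [if_neg (by simp), if_pos rfl]
  have hterm : ∀ y, ((2 / Real.log 2 * ((P y).toReal -
      (P y).toReal ^ (1 / 2 : ℝ) * (Q y).toReal ^ (1 - 1 / 2 : ℝ)) : ℝ) : EReal) ≤
      ((P y).toReal : EReal) * elog2 (P y / Q y) := by
    intro y
    have hPt := dist_ne_top P hP y
    have hQt := dist_ne_top Q hQ y
    by_cases hp : P y = 0
    · simp [hp]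
    have hpr : 0 < (P y).toReal := ENNReal.toReal_pos hp hPt
    by_cases hq : Q y = 0
    · have : elog2 (P y / Q y) = ⊤ := by
        rw [hq, ENNReal.div_zero hp]; simp [elog2]
      rw [this, EReal.coe_mul_top_of_pos hpr]; exact le_top
    have hqr : 0 < (Q y).toReal := ENNReal.toReal_pos hq hQt
    set v := (P y).toReal
    set q := (Q y).toReal
    have hel : ((Real.logb 2 (v / q) : ℝ) : EReal) ≤ elog2 (P y / Q y) := by
      apply le_elog2
      rw [Real.rpow_logb (by norm_num) (by norm_num) (by positivity),
        ENNReal.ofReal_div_of_pos hqr, ENNReal.ofReal_toReal hPt, ENNReal.ofReal_toReal hQt]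
    refine le_trans ?_ (mul_le_mul_of_nonneg_left hel (by exact_mod_cast hpr.le))
    rw [← EReal.coe_mul, EReal.coe_le_coe_iff]
    have e1 : (1 - 1 / 2 : ℝ) = 1 / 2 := by norm_num
    rw [e1, ← Real.sqrt_eq_rpow, ← Real.sqrt_eq_rpow]
    have hsv : 0 < √v := Real.sqrt_pos.2 hpr
    have hsq : 0 < √q := Real.sqrt_pos.2 hqr
    have hlog : Real.logb 2 (v / q) = 2 / Real.log 2 * Real.log (√v / √q) := by
      rw [Real.logb, ← Real.sqrt_div hpr.le, Real.log_sqrt (by positivity)]; ring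
    have h3 := Real.one_sub_inv_le_log_of_pos (div_pos hsv hsq)
    rw [hlog]
    have hvv : √v * √v = v := Real.mul_self_sqrt hpr.le
    have h4 : v - √v * √q ≤ v * Real.log (√v / √q) := by
      calc v - √v * √q = v * (1 - (√v / √q)⁻¹) := by
            rw [inv_div]
            have : v * (√q / √v) = √v * √q := by
              nth_rewrite 1 [← hvv]; field_simp
            rw [mul_sub, this, mul_one]
        _ ≤ _ := mul_le_mul_of_nonneg_left h3 hpr.le
    calc 2 / Real.log 2 * (v - √v * √q) ≤ 2 / Real.log 2 * (v * Real.log (√v / √q)) := by gcongr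
      _ = _ := by ring
  refine le_trans ?_ (Finset.sum_le_sum fun y _ => hterm y)
  rw [← coe_sum_EReal, EReal.coe_le_coe_iff, ← Finset.mul_sum, Finset.sum_sub_distrib,
    dist_toReal P hP, mul_assoc]
  refine mul_le_mul_of_nonneg_left ?_ (by positivity)
  linarith

lemma min_le_logb (z : ℝ) (hz : 0 ≤ z) : min 1 z ≤ Real.logb 2 (1 + z) := by
  rw [Real.le_logb_iff_rpow_le (by norm_num) (by linarith)]
  have h := rpow_one_add_le_one_add_mul_self (s := 1) (by norm_num) (p := min 1 z)
    (le_min (by norm_num) hz) (min_le_left _ _)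
  have e : (1 + 1 : ℝ) = 2 := by norm_num
  rw [e] at h
  have := min_le_right 1 z
  linarith

lemma div_gt_one (s : ℝ) (hs : 0 < s) : ∃ c : ℝ, 0 < c ∧
    ∀ {Y : Type u} [Fintype Y] (θ : ℝ) (P Q : Y → ℝ≥0∞),
    0 < θ → θ ≤ 1 / 2 → ∑ y, P y = 1 → ∑ y, Q y = 1 →
    ((s⁻¹ * min 1 (c * θ ^ (-s) * massB θ P Q) : ℝ) : EReal) ≤
      renyiD (1 + ENNReal.ofReal s) P Q := by
  obtain ⟨c, hc, h⟩ := pt_gt_one s hs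
  refine ⟨c, hc, fun {Y} _ θ P Q hθ0 hθ hP hQ => ?_⟩
  have htr : (1 + ENNReal.ofReal s).toReal = 1 + s := by
    rw [ENNReal.toReal_add (by simp) (by simp), ENNReal.toReal_ofReal hs.le]; simp
  unfold renyiD
  rw [if_neg (by simp), if_neg (by simpa using hs), if_neg (by simp), htr]
  have e1 : (1 + s - 1) = s := by ring
  have e2 : (1 - (1 + s)) = -s := by ring
  rw [e1, e2, EReal.coe_mul]
  refine mul_le_mul_of_nonneg_left ?_ (by exact_mod_cast (inv_nonneg.2 hs.le))
  by_cases hbad : ∃ y, P y ≠ 0 ∧ Q y = 0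
  · obtain ⟨y, hp, hq⟩ := hbad
    have : ∑ x, P x ^ (1 + s) * Q x ^ (-s) = ⊤ := by
      rw [ENNReal.sum_eq_top]
      refine ⟨y, Finset.mem_univ y, ?_⟩
      rw [hq, ENNReal.zero_rpow_of_neg (by linarith)]
      refine ENNReal.mul_top ?_
      simp [hp]
      intro; linarith
    rw [this]; simp [elog2]
  push Not at hbad
  have hM := massB_nonneg θ P Q
  set z := c * θ ^ (-s) * massB θ P Q with hz
  have hz0 : 0 ≤ z := by positivity
  refine le_trans (EReal.coe_le_coe_iff.2 (min_le_logb z hz0)) ?_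
  apply le_elog2
  rw [Real.rpow_logb (by norm_num) (by norm_num) (by linarith)]
  have hfin : ∀ y, P y ^ (1 + s) * Q y ^ (-s) ≠ ⊤ := fun y => by
    by_cases hp : P y = 0
    · rw [hp, ENNReal.zero_rpow_of_pos (by linarith)]; simp
    · exact ENNReal.mul_ne_top
        (ENNReal.rpow_ne_top_of_nonneg (by linarith) (dist_ne_top P hP y))
        (ENNReal.rpow_ne_top_of_ne_zero (hbad y hp) (dist_ne_top Q hQ y))
  rw [ENNReal.ofReal_le_iff_le_toReal (by rw [ENNReal.sum_ne_top]; exact fun y _ => hfin y),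
    ENNReal.toReal_sum (fun y _ => hfin y)]
  simp_rw [ENNReal.toReal_mul, ← ENNReal.toReal_rpow]
  refine le_trans ?_ (Finset.sum_le_sum fun y _ => h θ (P y).toReal (Q y).toReal hθ0 hθ
    ENNReal.toReal_nonneg ENNReal.toReal_nonneg ?_)
  · rw [Finset.sum_add_distrib, Finset.sum_sub_distrib, ← Finset.mul_sum, ← Finset.mul_sum,
      ← Finset.mul_sum, dist_toReal P hP, dist_toReal Q hQ, hz]
    unfold massB
    linarith
  · intro hv hq
    have hp : P y ≠ 0 := fun h => hv (by simp [h])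
    exact hbad y hp (((ENNReal.toReal_eq_zero_iff _).1 hq).resolve_right (dist_ne_top Q hQ y))

lemma div_top {Y : Type u} [Fintype Y] (θ : ℝ) (P Q : Y → ℝ≥0∞) (hθ : θ ≤ 1 / 2) (hP : ∑ y, P y = 1)
    (hQ : ∑ y, Q y = 1) (hm : 0 < massB θ P Q) : (1 : EReal) ≤ renyiD ⊤ P Q := by
  unfold renyiD
  rw [if_neg (by simp), if_neg (by simp), if_pos rfl]
  obtain ⟨y, -, hy⟩ : ∃ y ∈ Finset.univ,
      0 < (if (Q y).toReal ≤ θ * (P y).toReal then (P y).toReal else (0 : ℝ)) := by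
    by_contra hcon
    push Not at hcon
    exact absurd (Finset.sum_nonpos hcon) (not_le.2 hm)
  split_ifs at hy with h
  swap
  · exact absurd hy (lt_irrefl _)
  have := le_elog2 1 (⨆ x, P x / Q x) ?_
  · exact_mod_cast this
  refine le_trans ?_ (le_iSup _ y)
  rw [Real.rpow_one, ENNReal.le_div_iff_mul_le (Or.inr (fun h => by simp [h] at hy))
    (Or.inl (dist_ne_top Q hQ y))]
  rw [← ENNReal.ofReal_toReal (dist_ne_top Q hQ y), ← ENNReal.ofReal_mul (by norm_num),
    ENNReal.ofReal_le_iff_le_toReal (dist_ne_top P hP y)]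
  nlinarith

end RST

namespace RST

lemma le_eLog2 (a : ℝ) (x : EReal) (h : (((2 : ℝ) ^ a : ℝ) : EReal) ≤ x) :
    (a : EReal) ≤ eLog2 x := by
  have hpos : (0 : ℝ) < 2 ^ a := by positivity
  unfold eLog2
  split_ifs with h0 h1
  · exact le_top
  · have := h.trans h1
    have h2 : (2 : ℝ) ^ a ≤ 0 := by exact_mod_cast this
    linarith
  · rw [EReal.coe_le_coe_iff]
    have hb : x ≠ ⊥ := fun hb => h1 (by rw [hb]; exact bot_le)
    have h2 : (2 : ℝ) ^ a ≤ x.toReal := by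
      rw [← EReal.coe_le_coe_iff, EReal.coe_toReal h0 hb]; exact h
    rw [Real.le_logb_iff_rpow_le (by norm_num) (lt_of_lt_of_le hpos h2)]
    exact h2

lemma exists_mix {X Y : Type*} [Fintype X] [Fintype Y] [Nonempty X]
    (W : X → Y → ℝ≥0∞) (hW : IsChannel W) (r : ℝ) (hrI : (r : EReal) < renyiCap ⊤ W)
    (s E : ℝ) (hs : 0 ≤ s) (hE0 : 0 ≤ E)
    (hE : ∀ t : ℝ, s ≤ t → 0 < t → ((ENNReal.ofReal t : ℝ≥0∞) : EReal) *
      ((r : EReal) - renyiCap (1 + ENNReal.ofReal t) W) ≤ (E : EReal)) (ε : ℝ) (hε : 0 < ε) :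
    ∃ (ι : Type) (_ : Fintype ι) (lam : ι → ℝ) (R : ι → X → Y → ℝ) (J D : ℝ),
      (∀ i, 0 ≤ lam i) ∧ ∑ i, lam i = 1 ∧ (∀ i, IsJ (fun x y => (W x y).toReal) (R i)) ∧
      ∑ i, lam i * Jf (fun x y => (W x y).toReal) (R i) = J ∧
      ∑ i, lam i * Df (fun x y => (W x y).toReal) (R i) = D ∧ r < J ∧
      D - s * (J - r) < E + ε := by
  set w : X → Y → ℝ := fun x y => (W x y).toReal with hw
  let S : Set (ℝ × ℝ) := {z | ∃ R, IsJ w R ∧ z = (Jf w R - r, Df w R - s * (Jf w R - r))}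
  have h1 : ∀ τ : ℝ, 0 ≤ τ → ∃ z ∈ S, z.2 - τ * z.1 < E + ε := by
    intro τ hτ
    rcases (add_nonneg hs hτ).eq_or_lt with h | h
    · obtain ⟨x0⟩ := (inferInstance : Nonempty X)
      let R : X → Y → ℝ := fun x y => if x = x0 then w x0 y else 0
      have hw1 : ∑ y, w x0 y = 1 := dist_toReal _ (hW x0)
      have hRJ : IsJ w R := by
        refine ⟨fun x y => ?_, ?_, fun x y hxy => ?_⟩
        · simp only [R]; split_ifs
          · exact ENNReal.toReal_nonneg
          · exact le_rfl
        · rw [Finset.sum_comm]; simp [R, hw1]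
        · simp only [R]; split_ifs with hx
          · rw [← hx]; exact hxy
          · rfl
      have hD : Df w R = 0 := by
        simp only [Df]
        refine Finset.sum_eq_zero fun x _ => Finset.sum_eq_zero fun y _ => ?_
        by_cases hx : x = x0
        · subst hx
          have : mX R x = 1 := by simp [mX, R, hw1]
          rw [this]
          simp only [R, if_true, one_mul]
          by_cases h0 : w x y = 0
          · rw [h0]; simp
          · rw [div_self h0]; simp
        · simp [R, hx]
      refine ⟨_, ⟨R, hRJ, rfl⟩, ?_⟩
      have hs0 : s = 0 := by linarith
      have hτ0 : τ = 0 := by linarith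
      simp only [hD, hs0, hτ0]; linarith
    · have hlt : ((r - (E + ε / 2) / (s + τ) : ℝ) : EReal) <
          renyiCap (1 + ENNReal.ofReal (s + τ)) W := by
        by_contra hcon
        push Not at hcon
        have h2 := hE (s + τ) (by linarith) h
        have h3 : ((r : EReal) - ((r - (E + ε / 2) / (s + τ) : ℝ) : EReal)) ≤
            (r : EReal) - renyiCap (1 + ENNReal.ofReal (s + τ)) W :=
          EReal.sub_le_sub le_rfl hcon
        have hc : ((ENNReal.ofReal (s + τ) : ℝ≥0∞) : EReal) = ((s + τ : ℝ) : EReal) := by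
          rw [EReal.coe_ennreal_ofReal, max_eq_left h.le]
        rw [hc] at h2
        have h4 := (mul_le_mul_of_nonneg_left h3
          (show (0 : EReal) ≤ ((s + τ : ℝ) : EReal) by exact_mod_cast h.le)).trans h2
        rw [← EReal.coe_sub, ← EReal.coe_mul, EReal.coe_le_coe_iff] at h4
        have h5 : (s + τ) * (r - (r - (E + ε / 2) / (s + τ))) = E + ε / 2 := by
          field_simp; ring
        linarith
      obtain ⟨R, hR, hRt⟩ := cap_tilt W hW (s + τ) h _ hlt
      refine ⟨_, ⟨R, hR, rfl⟩, ?_⟩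
      have h5 : (s + τ) * (r - (E + ε / 2) / (s + τ)) = (s + τ) * r - (E + ε / 2) := by
        field_simp
      rw [h5] at hRt
      simp only
      change _ ≤ (s + τ) * Jf w R - Df w R at hRt
      nlinarith
  have h2 : ∃ z ∈ S, 0 < z.1 := by
    obtain ⟨R, hR, hJ⟩ := cap_flat W hW r hrI
    exact ⟨_, ⟨R, hR, rfl⟩, by simpa using hJ⟩
  obtain ⟨z, hz, hz1, hz2⟩ := separation S (E + ε) h1 h2
  rw [mem_convexHull_iff_exists_fintype] at hz
  obtain ⟨ι, hι, lam, f, hl0, hl1, hf, hsum⟩ := hz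
  choose R hR hfR using hf
  have e1 : ∑ i, lam i * (Jf w (R i) - r) = z.1 := by
    rw [← hsum, Prod.fst_sum]
    refine Finset.sum_congr rfl fun i _ => ?_
    rw [hfR i]; simp
  have e2 : ∑ i, lam i * (Df w (R i) - s * (Jf w (R i) - r)) = z.2 := by
    rw [← hsum, Prod.snd_sum]
    refine Finset.sum_congr rfl fun i _ => ?_
    rw [hfR i]; simp
  have e3 : ∑ i, lam i * (Jf w (R i) - r) = ∑ i, lam i * Jf w (R i) - r := by
    simp_rw [mul_sub]; rw [Finset.sum_sub_distrib, ← Finset.sum_mul, hl1, one_mul]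
  have e4 : ∑ i, lam i * (Df w (R i) - s * (Jf w (R i) - r)) =
      ∑ i, lam i * Df w (R i) - s * (∑ i, lam i * (Jf w (R i) - r)) := by
    rw [Finset.mul_sum, ← Finset.sum_sub_distrib]
    refine Finset.sum_congr rfl fun i _ => ?_
    ring
  refine ⟨ι, hι, lam, R, _, _, hl0, hl1, hR, rfl, rfl, ?_, ?_⟩
  · linarith
  · rw [← e3, ← e4, e2]; exact hz2

lemma mass_bound {ι X Y : Type*} [Fintype ι] [Fintype X] [Fintype Y] (W : X → Y → ℝ≥0∞)
    (lam : ι → ℝ) (hl0 : ∀ i, 0 ≤ lam i)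
    (hl1 : ∑ i, lam i = 1) (R : ι → X → Y → ℝ)
    (hR : ∀ i, IsJ (fun x y => (W x y).toReal) (R i)) (r : ℝ) (J D : ℝ)
    (hJ : ∑ i, lam i * Jf (fun x y => (W x y).toReal) (R i) = J)
    (hD : ∑ i, lam i * Df (fun x y => (W x y).toReal) (R i) = D) (hrJ : r < J)
    (s E : ℝ) (hs : 0 ≤ s) (hDE : D - s * (J - r) < E) :
    ∃ δ κ d : ℝ, 0 < δ ∧ 0 < κ ∧ d - s * κ ≤ E ∧
      ∀ᶠ n : ℕ in atTop, ∀ c : ℝ, c ≤ n * (r + δ) → ∀ N : (Fin n → X) → (Fin n → Y) → ℝ≥0∞,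
      IsSimulation c N → IsChannel N ∧ ((2 : ℝ) ^ (-(n * κ)) ≤ 1 / 2) ∧
        ∃ x, 1 / 2 * (2 : ℝ) ^ (-(n * d)) ≤
          massB ((2 : ℝ) ^ (-(n * κ))) (prodCh n W x) (N x) := by
  set gap := E - (D - s * (J - r)) with hgap
  have hg : 0 < gap := by linarith
  set δ := min ((J - r) / 6) (gap / (1 + 3 * s)) with hδdef
  have hδ : 0 < δ := lt_min (by linarith) (by positivity)
  have hδ1 : δ ≤ (J - r) / 6 := min_le_left _ _
  have hδ2 : δ * (1 + 3 * s) ≤ gap := by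
    rw [← le_div_iff₀ (by positivity)]; exact min_le_right _ _
  have hκ : 0 < J - r - 3 * δ := by linarith
  refine ⟨δ, J - r - 3 * δ, D + δ, hδ, hκ, by nlinarith, ?_⟩
  filter_upwards [sim_core W lam hl0 hl1 R hR r δ hδ J D hJ hD, pow_small _ hκ] with n hn hp c hc N hN
  obtain ⟨x, hx⟩ := hn c hc N hN
  exact ⟨(sim_dom c N hN).1, by linarith, x, hx⟩

lemma Erf_le {X Y : Type*} [Fintype X] [Fintype Y] (α : ℝ≥0∞) (W : X → Y → ℝ≥0∞) (r E : ℝ)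
    (h : ∀ ε : ℝ, 0 < ε → ∃ δ K : ℝ, 0 < δ ∧ 0 < K ∧ ∀ᶠ n : ℕ in atTop, ∀ c : ℝ,
      c ≤ n * (r + δ) → ∀ N, IsSimulation c N →
      ((K * 2 ^ (-(n * (E + ε))) : ℝ) : EReal) ≤ chD α (prodCh n W) N) :
    Erf α W r ≤ (E : EReal) := by
  unfold Erf
  refine iSup_le fun ⟨c, hc0, hc⟩ => ?_
  refine EReal.le_of_forall_lt_iff_le.1 fun z hz => ?_
  have hz' : E < z := by exact_mod_cast hz
  set ε := (z - E) / 2 with hε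
  have hεp : 0 < ε := by linarith
  obtain ⟨δ, K, hδ, hK, hev⟩ := h ε hεp
  have hrate : ∀ᶠ n : ℕ in atTop, ((c n / n : ℝ) : EReal) < ((r + δ : ℝ) : EReal) := by
    refine eventually_lt_of_limsup_lt (lt_of_le_of_lt hc ?_)
    exact_mod_cast (by linarith : r < r + δ)
  obtain ⟨n0, hn0⟩ := exists_nat_gt (-Real.logb 2 K / ε)
  refine (liminf_le_limsup).trans (limsup_le_of_le (h := ?_))
  filter_upwards [hev, hrate, eventually_gt_atTop n0, eventually_gt_atTop 0] with n hn hcn hnn hnpos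
  have hnr : (0 : ℝ) < n := by exact_mod_cast hnpos
  have hcn' : c n ≤ n * (r + δ) := by
    have : c n / n < r + δ := by exact_mod_cast hcn
    rw [div_lt_iff₀ hnr] at this; linarith
  have hsim : ((K * 2 ^ (-(n * (E + ε))) : ℝ) : EReal) ≤ simD α (prodCh n W) (c n) :=
    le_iInf fun N => hn (c n) hcn' N.1 N.2
  have hpow : K * (2 : ℝ) ^ (-(n * (E + ε))) = 2 ^ (Real.logb 2 K - n * (E + ε)) := by
    rw [sub_eq_add_neg, Real.rpow_add (by norm_num), Real.rpow_logb (by norm_num) (by norm_num) hK]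
  rw [hpow] at hsim
  have hlog := le_eLog2 _ _ hsim
  have e : ((-1 : ℝ) / n) = -(1 / n) := by ring
  rw [e, EReal.coe_neg, neg_mul, EReal.neg_le]
  refine le_trans ?_ (mul_le_mul_of_nonneg_left hlog
    (show (0 : EReal) ≤ ((1 / n : ℝ) : EReal) by exact_mod_cast (by positivity : (0:ℝ) ≤ 1 / n)))
  rw [← EReal.coe_neg, ← EReal.coe_mul, EReal.coe_le_coe_iff]
  have h5 : -Real.logb 2 K < n * ε := by
    have : -Real.logb 2 K / ε < n := hn0.trans (by exact_mod_cast hnn)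
    rwa [div_lt_iff₀ hεp] at this
  rw [one_div, le_inv_mul_iff₀ hnr]
  nlinarith

/-- the case `α ≤ 1`. -/
lemma conv_le_one {X Y : Type*} [Fintype X] [Fintype Y] [Nonempty X]
    (W : X → Y → ℝ≥0∞) (hW : IsChannel W) (r : ℝ) (hrI : (r : EReal) < renyiCap ⊤ W)
    (E : ℝ) (hE0 : 0 ≤ E)
    (hE : ∀ t : ℝ, 0 ≤ t → 0 < t → ((ENNReal.ofReal t : ℝ≥0∞) : EReal) *
      ((r : EReal) - renyiCap (1 + ENNReal.ofReal t) W) ≤ (E : EReal))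
    (a : ℝ) (ha0 : 0 < a) (ha1 : a ≤ 1) : Erf (ENNReal.ofReal a) W r ≤ (E : EReal) := by
  apply Erf_le
  intro ε hε
  obtain ⟨ι, _, lam, R, J, D, hl0, hl1, hR, hJ, hD, hrJ, hDE⟩ :=
    exists_mix W hW r hrI 0 E le_rfl hE0 hE ε hε
  obtain ⟨δ, κ, d, hδ, hκ, hd, hev⟩ := mass_bound W lam hl0 hl1 R hR r J D hJ hD hrJ 0 (E + ε)
    le_rfl hDE
  obtain ⟨c, hc, hdiv⟩ : ∃ c : ℝ, 0 < c ∧ ∀ (n : ℕ) (θ : ℝ) (P Q : (Fin n → Y) → ℝ≥0∞),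
    θ ≤ 1 / 2 → ∑ y, P y = 1 → ∑ y, Q y = 1 →
    ((c * massB θ P Q : ℝ) : EReal) ≤ renyiD (ENNReal.ofReal a) P Q := by
    rcases ha1.eq_or_lt with h | h
    · obtain ⟨c, hc, hdiv⟩ := div_one'
      refine ⟨c, hc, fun n θ P Q => ?_⟩
      rw [h, ENNReal.ofReal_one]; exact hdiv θ P Q
    · obtain ⟨c, hc, hdiv⟩ := div_lt_one' a ha0 h
      exact ⟨c, hc, fun n θ P Q => hdiv θ P Q⟩
  refine ⟨δ, c / 2, hδ, by positivity, ?_⟩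
  filter_upwards [hev] with n hn b hb N hN
  obtain ⟨hNc, hθ, x, hx⟩ := hn b hb N hN
  refine le_trans ?_ (le_iSup (fun x => renyiD (ENNReal.ofReal a) (prodCh n W x) (N x)) x)
  refine le_trans ?_ (hdiv n _ _ _ hθ (prodCh_channel W hW n x) (hNc x))
  rw [EReal.coe_le_coe_iff]
  have h2 : (2 : ℝ) ^ (-(n * (E + ε))) ≤ 2 ^ (-(n * d)) := by
    apply Real.rpow_le_rpow_of_exponent_le (by norm_num)
    have : (n : ℝ) * d ≤ n * (E + ε) := by
      apply mul_le_mul_of_nonneg_left _ (by positivity); linarith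
    linarith
  calc c / 2 * (2 : ℝ) ^ (-(n * (E + ε))) ≤ c * (1 / 2 * 2 ^ (-(n * d))) := by
        nlinarith
    _ ≤ _ := by gcongr

lemma conv_gt_one {X Y : Type*} [Fintype X] [Fintype Y] [Nonempty X]
    (W : X → Y → ℝ≥0∞) (hW : IsChannel W) (r : ℝ) (hrI : (r : EReal) < renyiCap ⊤ W)
    (s E : ℝ) (hs : 0 < s) (hE0 : 0 ≤ E)
    (hE : ∀ t : ℝ, s ≤ t → 0 < t → ((ENNReal.ofReal t : ℝ≥0∞) : EReal) *
      ((r : EReal) - renyiCap (1 + ENNReal.ofReal t) W) ≤ (E : EReal)) :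
    Erf (1 + ENNReal.ofReal s) W r ≤ (E : EReal) := by
  apply Erf_le
  intro ε hε
  obtain ⟨ι, _, lam, R, J, D, hl0, hl1, hR, hJ, hD, hrJ, hDE⟩ :=
    exists_mix W hW r hrI s E hs.le hE0 hE ε hε
  obtain ⟨δ, κ, d, hδ, hκ, hd, hev⟩ := mass_bound W lam hl0 hl1 R hR r J D hJ hD hrJ s (E + ε)
    hs.le hDE
  obtain ⟨c, hc, hdiv⟩ := div_gt_one s hs
  refine ⟨δ, s⁻¹ * min 1 (c / 2), hδ, by positivity, ?_⟩
  filter_upwards [hev] with n hn b hb N hN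
  obtain ⟨hNc, hθ, x, hx⟩ := hn b hb N hN
  refine le_trans ?_ (le_iSup (fun x => renyiD (1 + ENNReal.ofReal s) (prodCh n W x) (N x)) x)
  refine le_trans ?_ (hdiv _ _ _ (by positivity) hθ (prodCh_channel W hW n x) (hNc x))
  rw [EReal.coe_le_coe_iff, mul_assoc]
  refine mul_le_mul_of_nonneg_left ?_ (by positivity)
  set e := (2 : ℝ) ^ (-(n * (E + ε))) with he
  have he0 : 0 < e := by positivity
  have he1 : e ≤ 1 := by
    apply Real.rpow_le_one_of_one_le_of_nonpos (by norm_num)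
    have : 0 ≤ (n : ℝ) * (E + ε) := by positivity
    linarith
  refine le_min ?_ ?_
  · calc min 1 (c / 2) * e ≤ 1 * 1 := by
          gcongr
          exact min_le_left _ _
      _ = 1 := by ring
  · have h2 : e ≤ ((2 : ℝ) ^ (-(n * κ))) ^ (-s) * 2 ^ (-(n * d)) := by
      rw [← Real.rpow_mul (by norm_num), ← Real.rpow_add (by norm_num)]
      apply Real.rpow_le_rpow_of_exponent_le (by norm_num)
      have : (n : ℝ) * (d - s * κ) ≤ n * (E + ε) :=
        mul_le_mul_of_nonneg_left hd (by positivity)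
      nlinarith
    calc min 1 (c / 2) * e ≤ c / 2 * (((2 : ℝ) ^ (-(n * κ))) ^ (-s) * 2 ^ (-(n * d))) := by
          gcongr
          exact min_le_right _ _
      _ = c * ((2 : ℝ) ^ (-(n * κ))) ^ (-s) * (1 / 2 * 2 ^ (-(n * d))) := by ring
      _ ≤ _ := by gcongr

lemma conv_top {X Y : Type*} [Fintype X] [Fintype Y] [Nonempty X]
    (W : X → Y → ℝ≥0∞) (hW : IsChannel W) (r : ℝ) (hrI : (r : EReal) < renyiCap ⊤ W) :
    Erf ⊤ W r ≤ ((0 : ℝ) : EReal) := by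
  apply Erf_le
  intro ε hε
  obtain ⟨R, hR, hJ⟩ := cap_flat W hW r hrI
  obtain ⟨δ, κ, d, hδ, hκ, hd, hev⟩ := mass_bound (ι := Unit) W (fun _ => 1) (fun _ => zero_le_one)
    (by simp) (fun _ => R) (fun _ => hR) r _ _ (by simp) (by simp; rfl) hJ 0
    (Df (fun x y => (W x y).toReal) R + 1) le_rfl (by linarith)
  refine ⟨δ, 1, hδ, one_pos, ?_⟩
  filter_upwards [hev] with n hn b hb N hN
  obtain ⟨hNc, hθ, x, hx⟩ := hn b hb N hN
  refine le_trans ?_ (le_iSup (fun x => renyiD ⊤ (prodCh n W x) (N x)) x)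
  refine le_trans ?_ (div_top _ _ _ hθ (prodCh_channel W hW n x) (hNc x)
    (lt_of_lt_of_le (by positivity) hx))
  have : (1 : ℝ) * 2 ^ (-(n * (0 + ε))) ≤ 1 := by
    rw [one_mul]
    apply Real.rpow_le_one_of_one_le_of_nonpos (by norm_num)
    have : 0 ≤ (n : ℝ) * (0 + ε) := by positivity
    linarith
  exact_mod_cast this

end RST

namespace RST

/-- **Converse bound for the reliability function** (Theorem 7).
For `0 ≤ r < I_∞(W)`: `E_rf^{(1+s)}(W,r) ≤ sup_{t ≥ 0} t(r - I_{1+t}(W))` for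
`s ∈ (-1,0]`, and `E_rf^{(1+s)}(W,r) ≤ |sup_{t ≥ s} t(r - I_{1+t}(W))|⁺` for
`s ∈ (0,∞]`. -/
theorem reliability_function_converse
    {X Y : Type*} [Fintype X] [Fintype Y] [Nonempty X] [Nonempty Y]
    (W : X → Y → ℝ≥0∞) (hW : IsChannel W)
    (r : ℝ) (hr0 : 0 ≤ r) (hrI : (r : EReal) < renyiCap ⊤ W) :
    (∀ s : ℝ, -1 < s → s ≤ 0 →
      Erf (ENNReal.ofReal (1 + s)) W r ≤
        ⨆ t : ℝ≥0∞, (t : EReal) * ((r : EReal) - renyiCap (1 + t) W)) ∧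
    (∀ s : ℝ≥0∞, 0 < s →
      Erf (1 + s) W r ≤
        max (⨆ t : {t : ℝ≥0∞ // s ≤ t},
          (t.1 : EReal) * ((r : EReal) - renyiCap (1 + t.1) W)) 0) := by
  constructor
  · intro s hs1 hs0
    set B := ⨆ t : ℝ≥0∞, (t : EReal) * ((r : EReal) - renyiCap (1 + t) W) with hB
    have hle : ∀ t : ℝ≥0∞, (t : EReal) * ((r : EReal) - renyiCap (1 + t) W) ≤ B := fun t =>
      le_iSup (fun t : ℝ≥0∞ => (t : EReal) * ((r : EReal) - renyiCap (1 + t) W)) t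
    have hB0 : 0 ≤ B := by
      have := hle 0
      simpa using this
    by_cases hT : B = ⊤
    · rw [hT]; exact le_top
    have hBb : B ≠ ⊥ := fun h => by rw [h] at hB0; simp at hB0
    have hBr : ((B.toReal : ℝ) : EReal) = B := EReal.coe_toReal hT hBb
    rw [← hBr]
    refine conv_le_one W hW r hrI B.toReal (EReal.toReal_nonneg hB0) (fun t _ _ => ?_) (1 + s)
      (by linarith) (by linarith)
    rw [hBr]; exact hle _
  · intro s hs
    set B := max (⨆ t : {t : ℝ≥0∞ // s ≤ t},
          (t.1 : EReal) * ((r : EReal) - renyiCap (1 + t.1) W)) 0 with hB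
    have hB0 : 0 ≤ B := le_max_right _ _
    by_cases hst : s = ⊤
    · rw [hst, add_top]
      exact (conv_top W hW r hrI).trans (by simpa using hB0)
    have hle : ∀ t : ℝ≥0∞, s ≤ t → (t : EReal) * ((r : EReal) - renyiCap (1 + t) W) ≤ B :=
      fun t ht => le_trans (le_iSup (fun t : {t : ℝ≥0∞ // s ≤ t} =>
        (t.1 : EReal) * ((r : EReal) - renyiCap (1 + t.1) W)) ⟨t, ht⟩) (le_max_left _ _)
    by_cases hT : B = ⊤
    · rw [hT]; exact le_top
    have hBb : B ≠ ⊥ := fun h => by rw [h] at hB0; simp at hB0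
    have hBr : ((B.toReal : ℝ) : EReal) = B := EReal.coe_toReal hT hBb
    have hsr : s = ENNReal.ofReal s.toReal := (ENNReal.ofReal_toReal hst).symm
    have hspos : 0 < s.toReal := ENNReal.toReal_pos hs.ne' hst
    have := conv_gt_one W hW r hrI s.toReal B.toReal hspos (EReal.toReal_nonneg hB0)
      (fun t ht _ => by
        rw [hBr]
        refine hle _ ?_
        rw [hsr]; exact ENNReal.ofReal_le_ofReal ht)
    rwa [← hsr, hBr] at this

end RST
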